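/- arXiv:1401.0684 — 4 statements merged into one kernel-verified Lean document; each statement's English description precedes it below -/
import Mathlib

section
/- Let G be a triconnected 4-planar graph, T a separating triangle of G with edge set {e, e_in, e_out}, and let H_in and H_out be subhamiltonian cycles of the closed inside subgraph in⁺(T) and the closed outside subgraph out⁺(T), respectively. If the edges of T used by H_in are exactly {e_in, e} and the edges of T used by H_out are exactly {e_out, e}, then G is subhamiltonian. -/
open Set

universe u

/-- A topological embedding of a simple graph in the plane: vertices are mapped to
distinct points and every edge is realized by a simple arc joining the images of its
endpoints, such that two arcs of distinct edges meet only in common endpoints and no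
vertex point lies in the interior of an arc. -/
structure PlaneEmbedding {V : Type u} (G : SimpleGraph V) where
  pos : V → ℝ × ℝ
  pos_inj : Function.Injective pos
  arc : ∀ ⦃u v : V⦄, G.Adj u v → Set (ℝ × ℝ)
  arc_symm : ∀ ⦃u v : V⦄ (h : G.Adj u v), arc h.symm = arc h
  arc_curve : ∀ ⦃u v : V⦄ (h : G.Adj u v), ∃ f : ℝ → ℝ × ℝ,
    ContinuousOn f (Set.Icc 0 1) ∧ Set.InjOn f (Set.Icc 0 1) ∧
    f 0 = pos u ∧ f 1 = pos v ∧ f '' Set.Icc 0 1 = arc h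
  arc_inter : ∀ ⦃u v w z : V⦄ (h₁ : G.Adj u v) (h₂ : G.Adj w z),
    s(u, v) ≠ s(w, z) → arc h₁ ∩ arc h₂ ⊆ ({pos u, pos v} ∩ {pos w, pos z} : Set (ℝ × ℝ))
  pos_arc : ∀ ⦃u v : V⦄ (h : G.Adj u v) (w : V), pos w ∈ arc h → w = u ∨ w = v

/-- A graph is planar if it admits a topological embedding in the plane. -/
def SimpleGraph.IsPlanar {V : Type u} (G : SimpleGraph V) : Prop :=
  Nonempty (PlaneEmbedding G)

/-- The point set covered by a plane embedding. -/
def PlaneEmbedding.drawing {V : Type u} {G : SimpleGraph V} (E : PlaneEmbedding G) :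
    Set (ℝ × ℝ) :=
  Set.range E.pos ∪ ⋃ (u : V) (v : V) (h : G.Adj u v), E.arc h

/-- A face of a plane embedding is a connected component of the complement of the drawing. -/
def PlaneEmbedding.IsFace {V : Type u} {G : SimpleGraph V} (E : PlaneEmbedding G)
    (F : Set (ℝ × ℝ)) : Prop :=
  ∃ p, p ∉ E.drawing ∧ F = connectedComponentIn E.drawingᶜ p

/-- A vertex is incident to a face if its point lies on the boundary of the face. -/
def PlaneEmbedding.VertexOnFace {V : Type u} {G : SimpleGraph V} (E : PlaneEmbedding G)
    (v : V) (F : Set (ℝ × ℝ)) : Prop :=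
  E.pos v ∈ closure F

/-- Maximum degree at most `d`. -/
def SimpleGraph.MaxDegreeLE {V : Type u} (G : SimpleGraph V) (d : ℕ) : Prop :=
  ∀ v : V, (G.neighborSet v).ncard ≤ d

/-- A graph is triconnected (3-connected) if it has more than three vertices, is
connected, and stays connected after removing any two vertices. -/
def SimpleGraph.IsTriconnected {V : Type u} (G : SimpleGraph V) : Prop :=
  3 < Nat.card V ∧ G.Connected ∧
    ∀ u v : V, (G.induce {w : V | w ≠ u ∧ w ≠ v}).Connected

/-- A graph is biconnected (2-connected) if it has more than two vertices, is
connected, and stays connected after removing any single vertex. -/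
def SimpleGraph.IsBiconnected {V : Type u} (G : SimpleGraph V) : Prop :=
  2 < Nat.card V ∧ G.Connected ∧ ∀ u : V, (G.induce {w : V | w ≠ u}).Connected

/-- A graph is subhamiltonian if it is a spanning subgraph of a planar hamiltonian graph. -/
def SimpleGraph.IsSubhamiltonian {V : Type u} [Fintype V] (G : SimpleGraph V) : Prop :=
  ∃ H : SimpleGraph V, G ≤ H ∧ H.IsPlanar ∧ (letI := Classical.decEq V; H.IsHamiltonian)

/-- The graph consisting of the edges of the cyclic vertex sequence `σ`. -/
def cyclicSuccGraph {W : Type u} (σ : ZMod (Nat.card W) ≃ W) : SimpleGraph W :=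
  SimpleGraph.fromRel fun u v => ∃ i, u = σ i ∧ v = σ (i + 1)

/-- The cyclic ordering `σ` of all vertices of `G` is a subhamiltonian cycle for `G` if
adding the edges between consecutive vertices of `σ` keeps the graph planar. -/
def SimpleGraph.IsSubhamiltonianCycle {W : Type u} (G : SimpleGraph W)
    (σ : ZMod (Nat.card W) ≃ W) : Prop :=
  SimpleGraph.IsPlanar (G ⊔ cyclicSuccGraph σ)

/-- The edges (pairs of consecutive vertices) of the cyclic sequence `σ`. -/
def cycleEdges {W : Type u} (σ : ZMod (Nat.card W) ≃ W) : Set (Sym2 W) :=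
  {e | ∃ i, e = s(σ i, σ (i + 1))}

/-- The subhamiltonian cycle `σ` crosses the face `F` at position `i` if the two
consecutive vertices `σ i` and `σ (i+1)` are both incident to `F` but not adjacent. -/
def CrossesFaceAt {V : Type u} {G : SimpleGraph V} (E : PlaneEmbedding G)
    (σ : ZMod (Nat.card V) ≃ V) (F : Set (ℝ × ℝ)) (i : ZMod (Nat.card V)) : Prop :=
  E.VertexOnFace (σ i) F ∧ E.VertexOnFace (σ (i + 1)) F ∧ ¬ G.Adj (σ i) (σ (i + 1))

/-- A separating triangle: a triangle whose removal disconnects the graph. -/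
def SimpleGraph.IsSepTriangle {V : Type u} (G : SimpleGraph V) (a b c : V) : Prop :=
  G.Adj a b ∧ G.Adj b c ∧ G.Adj a c ∧
    ¬ (G.induce {v : V | v ≠ a ∧ v ≠ b ∧ v ≠ c}).Connected

section Triangle

variable {V : Type u} {G : SimpleGraph V} (E : PlaneEmbedding G) {a b c : V}

/-- The Jordan curve formed by the drawing of the triangle `a b c`. -/
def triangleDrawing (hab : G.Adj a b) (hbc : G.Adj b c) (hac : G.Adj a c) :
    Set (ℝ × ℝ) :=
  E.arc hab ∪ E.arc hbc ∪ E.arc hac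

/-- The vertices strictly inside the triangle `a b c` (bounded side of the Jordan curve). -/
def insideTriangle (hab : G.Adj a b) (hbc : G.Adj b c) (hac : G.Adj a c) : Set V :=
  {v | v ≠ a ∧ v ≠ b ∧ v ≠ c ∧
    Bornology.IsBounded
      (connectedComponentIn (triangleDrawing E hab hbc hac)ᶜ (E.pos v))}

/-- The vertices strictly outside the triangle `a b c` (unbounded side of the Jordan curve). -/
def outsideTriangle (hab : G.Adj a b) (hbc : G.Adj b c) (hac : G.Adj a c) : Set V :=
  {v | v ≠ a ∧ v ≠ b ∧ v ≠ c ∧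
    ¬ Bornology.IsBounded
      (connectedComponentIn (triangleDrawing E hab hbc hac)ᶜ (E.pos v))}

end Triangle

section ClosedTriangle

variable {V : Type u} {G : SimpleGraph V} (E : PlaneEmbedding G) {a b c : V}

/-- The subgraph of `G` induced by the triangle together with all vertices inside it
is `G.induce (closedInsideTriangle E hab hbc hac)`. -/
def closedInsideTriangle (hab : G.Adj a b) (hbc : G.Adj b c) (hac : G.Adj a c) :
    Set V :=
  insideTriangle E hab hbc hac ∪ {a, b, c}

/-- The subgraph of `G` induced by the triangle together with all vertices outside it
is `G.induce (closedOutsideTriangle E hab hbc hac)`. -/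
def closedOutsideTriangle (hab : G.Adj a b) (hbc : G.Adj b c) (hac : G.Adj a c) :
    Set V :=
  outsideTriangle E hab hbc hac ∪ {a, b, c}

end ClosedTriangle


section

def IsArc (p q : ℂ) (S : Set ℂ) : Prop :=
  ∃ f : ℝ → ℂ, ContinuousOn f (Icc 0 1) ∧ InjOn f (Icc 0 1) ∧ f 0 = p ∧ f 1 = q ∧
    f '' Icc 0 1 = S

lemma IsArc.symm {p q : ℂ} {S : Set ℂ} (h : IsArc p q S) : IsArc q p S := by
  obtain ⟨f, hc, hi, h0, h1, hS⟩ := h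
  have hm : MapsTo (fun t : ℝ => 1 - t) (Icc 0 1) (Icc 0 1) := by
    intro t ht; simp only [mem_Icc] at *; constructor <;> linarith [ht.1, ht.2]
  refine ⟨fun t => f (1 - t), hc.comp (by fun_prop) hm, ?_, by simpa using h1, by simpa using h0, ?_⟩
  · intro s hs t ht hst
    have := hi (hm hs) (hm ht) hst
    linarith
  · rw [← hS]
    ext z; constructor
    · rintro ⟨t, ht, rfl⟩; exact ⟨1 - t, hm ht, rfl⟩
    · rintro ⟨t, ht, rfl⟩; exact ⟨1 - t, hm ht, by simp⟩

lemma IsArc.isCompact {p q : ℂ} {S : Set ℂ} (h : IsArc p q S) : IsCompact S := by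
  obtain ⟨f, hc, hi, h0, h1, hS⟩ := h
  rw [← hS]; exact isCompact_Icc.image_of_continuousOn hc

lemma IsArc.left_mem {p q : ℂ} {S : Set ℂ} (h : IsArc p q S) : p ∈ S := by
  obtain ⟨f, hc, hi, h0, h1, hS⟩ := h
  rw [← hS]; exact ⟨0, by simp, h0⟩

lemma IsArc.right_mem {p q : ℂ} {S : Set ℂ} (h : IsArc p q S) : q ∈ S := h.symm.left_mem

lemma IsArc.image {p q : ℂ} {S K : Set ℂ} (h : IsArc p q S) (φ : ℂ → ℂ) (hSK : S ⊆ K)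
    (hφ : ContinuousOn φ K) (hφi : InjOn φ K) : IsArc (φ p) (φ q) (φ '' S) := by
  obtain ⟨f, hc, hi, h0, h1, hS⟩ := h
  have hm : MapsTo f (Icc 0 1) K := fun t ht => hSK (hS ▸ ⟨t, ht, rfl⟩)
  refine ⟨φ ∘ f, hφ.comp hc hm, hφi.comp hi hm, by simp [h0], by simp [h1], ?_⟩
  rw [image_comp, hS]

/-- initial sub-arc -/
lemma isArc_sub {g : ℝ → ℂ} (hc : ContinuousOn g (Icc 0 1)) (hi : InjOn g (Icc 0 1))
    {s : ℝ} (h0 : 0 < s) (h1 : s ≤ 1) : IsArc (g 0) (g s) (g '' Icc 0 s) := by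
  have hm : MapsTo (fun t : ℝ => s * t) (Icc 0 1) (Icc 0 1) := by
    intro t ht; simp only [mem_Icc] at *
    constructor <;> nlinarith [ht.1, ht.2]
  refine ⟨fun t => g (s * t), hc.comp (by fun_prop) hm, ?_, by simp, by simp, ?_⟩
  · intro a ha b hb hab
    exact mul_left_cancel₀ h0.ne' (hi (hm ha) (hm hb) hab)
  · ext z; constructor
    · rintro ⟨t, ht, rfl⟩
      simp only [mem_Icc] at ht
      exact ⟨s * t, ⟨by nlinarith [ht.1], by nlinarith [ht.2]⟩, rfl⟩
    · rintro ⟨t, ht, rfl⟩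
      refine ⟨t / s, ⟨by have := ht.1; positivity, by rw [div_le_one h0]; exact ht.2⟩, ?_⟩
      simp only
      rw [mul_div_cancel₀ _ h0.ne']

/-- concatenation of a segment and an arc, with explicit parametrization -/
lemma concat_seg {p e q : ℂ} {T : Set ℂ} (hT : IsArc e q T) (hpe : p ≠ e)
    (hd : ∀ z ∈ segment ℝ p e, z ∈ T → z = e) :
    ∃ g : ℝ → ℂ, ContinuousOn g (Icc 0 1) ∧ InjOn g (Icc 0 1) ∧ g 0 = p ∧ g 1 = q ∧
      g '' Icc 0 1 = segment ℝ p e ∪ T ∧ (∀ t ∈ Icc (0 : ℝ) (1 / 2), g t = p + (2 * t : ℝ) • (e - p)) ∧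
      ∀ t ∈ Icc (1 / 2 : ℝ) 1, g t ∈ T := by
  obtain ⟨f, hc, hi, h0, h1, hS⟩ := hT
  set g : ℝ → ℂ := fun t => if t ≤ 1 / 2 then p + (2 * t : ℝ) • (e - p) else f (2 * t - 1) with hg
  have gl : ∀ t : ℝ, t ≤ 1 / 2 → g t = p + (2 * t : ℝ) • (e - p) := fun t ht => by
    simp only [hg]; rw [if_pos ht]
  have gr : ∀ t : ℝ, 1 / 2 ≤ t → g t = f (2 * t - 1) := fun t ht => by
    rcases eq_or_lt_of_le ht with h | h
    · rw [gl t h.symm.le, ← h]; norm_num [h0]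
    · simp only [hg]; rw [if_neg (not_le.2 h)]
  have hmR : MapsTo (fun t : ℝ => 2 * t - 1) (Icc (1/2) 1) (Icc 0 1) := by
    intro t ht; simp only [mem_Icc] at *; constructor <;> linarith [ht.1, ht.2]
  have segm : ∀ t ∈ Icc (0:ℝ) (1/2), p + (2 * t : ℝ) • (e - p) ∈ segment ℝ p e := by
    intro t ht
    rw [segment_eq_image']
    exact ⟨2 * t, ⟨by linarith [ht.1], by linarith [ht.2]⟩, rfl⟩
  have hT2 : ∀ t ∈ Icc (1/2 : ℝ) 1, g t ∈ T := fun t ht => by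
    rw [gr t ht.1, ← hS]; exact ⟨_, hmR ht, rfl⟩
  have key : ∀ s t : ℝ, s ∈ Icc (0:ℝ) (1/2) → t ∈ Icc (1/2:ℝ) 1 → g s = g t → s = t := by
    intro s t hs ht hst
    have h1' : g s ∈ segment ℝ p e := by rw [gl s hs.2]; exact segm s hs
    have h2' : g s ∈ T := hst ▸ hT2 t ht
    have he := hd _ h1' h2'
    have hs' : s = 1/2 := by
      rw [gl s hs.2] at he
      have h3 : (2 * s - 1 : ℝ) • (e - p) = 0 := by
        have : (2 * s - 1 : ℝ) • (e - p) = (p + (2 * s : ℝ) • (e - p)) - e := by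
          rw [sub_smul]; simp; ring
        rw [this, he, sub_self]
      rcases smul_eq_zero.1 h3 with h | h
      · linarith
      · exact absurd (sub_eq_zero.1 h).symm hpe
    have ht' : 2 * t - 1 = 0 := by
      apply hi (hmR ht) (by simp)
      rw [← gr t ht.1, ← hst, he, h0]
    linarith
  have hcont : ContinuousOn g (Icc 0 1) := by
    have e1 : Icc (0:ℝ) 1 = Icc 0 (1/2) ∪ Icc (1/2) 1 := by
      rw [Icc_union_Icc_eq_Icc] <;> norm_num
    rw [e1]
    apply ContinuousOn.union_of_isClosed _ _ isClosed_Icc isClosed_Icc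
    · refine ContinuousOn.congr (f := fun t : ℝ => p + (2 * t : ℝ) • (e - p)) (by fun_prop) ?_
      intro t ht; exact gl t ht.2
    · refine ContinuousOn.congr (f := fun t : ℝ => f (2 * t - 1)) (hc.comp (by fun_prop) hmR) ?_
      intro t ht; exact gr t ht.1
  refine ⟨g, hcont, ?_, ?_, ?_, ?_, fun t ht => gl t ht.2, hT2⟩
  · intro s hs t ht hst
    rcases le_total s (1/2) with a | a <;> rcases le_total t (1/2) with b | b
    · rw [gl s a, gl t b] at hst
      have h3 : (2 * s - 2 * t : ℝ) • (e - p) = 0 := by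
        rw [sub_smul, sub_eq_zero]; exact add_left_cancel hst
      rcases smul_eq_zero.1 h3 with h | h
      · linarith
      · exact absurd (sub_eq_zero.1 h).symm hpe
    · exact key s t ⟨hs.1, a⟩ ⟨b, ht.2⟩ hst
    · exact (key t s ⟨ht.1, b⟩ ⟨a, hs.2⟩ hst.symm).symm
    · rw [gr s a, gr t b] at hst
      have := hi (hmR ⟨a, hs.2⟩) (hmR ⟨b, ht.2⟩) hst
      linarith
  · rw [gl 0 (by norm_num)]; simp
  · rw [gr 1 (by norm_num)]; norm_num [h1]
  · ext z; constructor
    · rintro ⟨t, ht, rfl⟩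
      rcases le_total t (1/2) with b | b
      · left; rw [gl t b]; exact segm t ⟨ht.1, b⟩
      · right; exact hT2 t ⟨b, ht.2⟩
    · rintro (h | h)
      · rw [segment_eq_image'] at h
        obtain ⟨t, ht, rfl⟩ := h
        refine ⟨t / 2, ⟨by linarith [ht.1], by linarith [ht.2]⟩, ?_⟩
        rw [gl _ (by linarith [ht.2])]
        congr 2; ring
      · rw [← hS] at h
        obtain ⟨t, ht, rfl⟩ := h
        refine ⟨(t + 1) / 2, ⟨by linarith [ht.1], by linarith [ht.2]⟩, ?_⟩
        rw [gr _ (by linarith [ht.1])]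
        congr 1; ring

lemma isArc_concat {p e q : ℂ} {T : Set ℂ} (hT : IsArc e q T)
    (hd : ∀ z ∈ segment ℝ p e, z ∈ T → z = e) : IsArc p q (segment ℝ p e ∪ T) := by
  by_cases hpe : p = e
  · subst hpe
    rw [segment_same, union_eq_right.2 (singleton_subset_iff.2 hT.left_mem)]
    exact hT
  · obtain ⟨g, a, b, c, d, e, -⟩ := concat_seg hT hpe hd
    exact ⟨g, a, b, c, d, e⟩

lemma isArc_segment {p q : ℂ} (h : p ≠ q) : IsArc p q (segment ℝ p q) := by
  refine ⟨fun t => p + t • (q - p), by fun_prop, ?_, by simp, by simp, (segment_eq_image' ℝ p q).symm⟩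
  intro s hs t ht hst
  have h3 : (s - t : ℝ) • (q - p) = 0 := by
    rw [sub_smul, sub_eq_zero]; exact add_left_cancel hst
  rcases smul_eq_zero.1 h3 with h' | h'
  · linarith
  · exact absurd (sub_eq_zero.1 h').symm h

/-- first hitting of a closed ball -/
lemma first_hit {g : ℝ → ℂ} {T r : ℝ} {c : ℂ} (hT : 0 ≤ T) (hc : ContinuousOn g (Icc 0 T))
    (h0 : g 0 ∉ Metric.closedBall c r) (h1 : g T ∈ Metric.closedBall c r) :
    ∃ s, 0 < s ∧ s ≤ T ∧ g s ∈ Metric.sphere c r ∧ ∀ t, 0 ≤ t → t < s → g t ∉ Metric.closedBall c r := by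
  set A := {t | t ∈ Icc 0 T ∧ dist (g t) c ≤ r} with hA
  have hdc : ContinuousOn (fun t => dist (g t) c) (Icc 0 T) :=
    (continuous_id.dist continuous_const).comp_continuousOn hc
  have hcl : IsClosed A := by
    have := hdc.preimage_isClosed_of_isClosed isClosed_Icc (isClosed_Iic (a := r))
    exact this
  have hne : A.Nonempty := ⟨T, ⟨hT, le_rfl⟩, h1⟩
  have hbd : BddBelow A := ⟨0, fun t ht => ht.1.1⟩
  have hs := hcl.csInf_mem hne hbd
  set s := sInf A
  have hlt : ∀ t, 0 ≤ t → t < s → g t ∉ Metric.closedBall c r := by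
    intro t ht hts hmem
    exact absurd (csInf_le hbd (show t ∈ A from ⟨⟨ht, hts.le.trans hs.1.2⟩, hmem⟩)) (not_le.2 hts)
  have hspos : 0 < s := by
    rcases eq_or_lt_of_le hs.1.1 with h | h
    · exfalso; apply h0; rw [h]; exact hs.2
    · exact h
  refine ⟨s, hspos, hs.1.2, ?_, hlt⟩
  refine le_antisymm hs.2 ?_
  by_contra hlt'
  push Not at hlt'
  have h0' : r < dist (g 0) c := by simpa using h0
  obtain ⟨t, ht, htr⟩ := intermediate_value_Icc' hspos.le (hdc.mono (Icc_subset_Icc_right hs.1.2)) ⟨hlt'.le, h0'.le⟩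
  simp only at htr
  rcases eq_or_lt_of_le ht.2 with h | h
  · rw [h] at htr; linarith
  · exact hlt t ht.1 h htr.le

/-- chords of a disc from a common point -/
lemma chord {c p e e' t : ℂ} {r : ℝ} (hp : p ∈ Metric.closedBall c r) (he : e ∈ Metric.sphere c r)
    (he' : e' ∈ Metric.sphere c r) (hne : e ≠ e') (h : t ∈ segment ℝ p e) (h' : t ∈ segment ℝ p e') :
    t = p := by
  by_contra htp
  rw [segment_eq_image'] at h h'
  obtain ⟨a, ha, rfl⟩ := h
  obtain ⟨b, hb, hab⟩ := h'
  simp only at hab htp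
  have ha0 : 0 < a := by
    rcases eq_or_lt_of_le ha.1 with h | h
    · exfalso; apply htp; rw [← h]; simp
    · exact h
  have hb0 : 0 < b := by
    rcases eq_or_lt_of_le hb.1 with h | h
    · exfalso; apply htp; rw [← hab, ← h]; simp
    · exact h
  have hsm : b • (e' - p) = a • (e - p) := add_left_cancel hab
  have hr : r ≠ 0 := by
    rintro rfl
    simp at he he'
    exact hne (he.trans he'.symm)
  have main : ∀ {a b : ℝ} {e e' : ℂ}, e ∈ Metric.sphere c r → e' ∈ Metric.sphere c r → e ≠ e' → 0 < a → 0 < b →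
      b • (e' - p) = a • (e - p) → a ≤ b → False := by
    intro a b e e' he he' hne ha0 hb0 hsm hle
    have hlt : a < b := by
      rcases eq_or_lt_of_le hle with h | h
      · exfalso; subst h
        have := smul_right_injective ℂ ha0.ne' hsm
        simp at this
        exact hne this.symm
      · exact h
    have hee : e' = p + (a / b) • (e - p) := by
      have : e' - p = (a / b) • (e - p) := by
        rw [div_eq_inv_mul, mul_smul, ← hsm, smul_smul, inv_mul_cancel₀ hb0.ne', one_smul]
      rw [← this]; ring
    have hpe : p ≠ e := by
      rintro rfl
      simp at hee
      exact hne hee.symm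
    have hin : e' ∈ openSegment ℝ p e := by
      rw [openSegment_eq_image']
      exact ⟨a / b, ⟨by positivity, by rw [div_lt_one hb0]; exact hlt⟩, hee.symm⟩
    have := openSegment_subset_ball_of_ne hp (Metric.sphere_subset_closedBall he) hpe hin
    rw [Metric.mem_ball] at this
    rw [Metric.mem_sphere] at he'
    linarith
  rcases le_total a b with h | h
  · exact main he he' hne ha0 hb0 hsm h
  · exact main he' he hne.symm hb0 ha0 hsm.symm h

end

section

structure Drw {V : Type u} (G : SimpleGraph V) (S : Set V) where
  pos : V → ℂ
  arc : V → V → Set ℂ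
  adj_mem : ∀ {a b : V}, G.Adj a b → a ∈ S
  pos_inj : InjOn pos S
  arc_symm : ∀ a b, arc a b = arc b a
  isArc : ∀ {a b : V}, G.Adj a b → IsArc (pos a) (pos b) (arc a b)
  inter : ∀ {a b c d : V} {p : ℂ}, G.Adj a b → G.Adj c d → s(a, b) ≠ s(c, d) →
    p ∈ arc a b → p ∈ arc c d → ∃ k ∈ S, p = pos k
  pos_arc : ∀ {a b w : V}, G.Adj a b → w ∈ S → pos w ∈ arc a b → w = a ∨ w = b

variable {V : Type u} {G : SimpleGraph V} {S : Set V}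

def Drw.image (D : Drw G S) (φ : ℂ → ℂ) (K : Set ℂ) (hφ : ContinuousOn φ K) (hi : InjOn φ K)
    (hK : ∀ a ∈ S, D.pos a ∈ K) (hK' : ∀ a b, G.Adj a b → D.arc a b ⊆ K) : Drw G S where
  pos := fun a => φ (D.pos a)
  arc := fun a b => φ '' D.arc a b
  adj_mem := D.adj_mem
  pos_inj := fun a ha b hb hab => D.pos_inj ha hb (hi (hK a ha) (hK b hb) hab)
  arc_symm := fun a b => by rw [D.arc_symm]
  isArc := fun {a b} h => (D.isArc h).image φ (hK' a b h) hφ hi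
  inter := by
    rintro a b c d p h h' hne ⟨q, hq, rfl⟩ ⟨q', hq', hqq⟩
    have := hi (hK' _ _ h' hq') (hK' _ _ h hq) hqq
    subst this
    obtain ⟨k, hk, hkk⟩ := D.inter h h' hne hq hq'
    exact ⟨k, hk, by rw [hkk]⟩
  pos_arc := by
    rintro a b w h hw ⟨q, hq, hqq⟩
    have := hi (hK' _ _ h hq) (hK _ hw) hqq
    subst this
    exact D.pos_arc h hw hq

lemma Drw.inter' (D : Drw G S) {a b c d : V} {p : ℂ} (h : G.Adj a b) (h' : G.Adj c d)
    (hne : s(a, b) ≠ s(c, d)) (hp : p ∈ D.arc a b) (hp' : p ∈ D.arc c d) :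
    ∃ k ∈ S, p = D.pos k ∧ (k = a ∨ k = b) ∧ (k = c ∨ k = d) := by
  obtain ⟨k, hk, rfl⟩ := D.inter h h' hne hp hp'
  exact ⟨k, hk, rfl, D.pos_arc h hk hp, D.pos_arc h' hk hp'⟩

lemma Drw.adj_mem' (D : Drw G S) {a b : V} (h : G.Adj a b) : b ∈ S := D.adj_mem h.symm

/-- all of the drawing except for the vertex `v` and its edges -/
def Drw.rest (D : Drw G S) (v : V) : Set ℂ :=
  {p | (∃ w ∈ S, w ≠ v ∧ p = D.pos w) ∨ ∃ a b, G.Adj a b ∧ a ≠ v ∧ b ≠ v ∧ p ∈ D.arc a b}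

lemma Drw.isClosed_rest [Finite V] (D : Drw G S) (v : V) : IsClosed (D.rest v) := by
  have : D.rest v = (⋃ w : {w // w ∈ S ∧ w ≠ v}, {D.pos w}) ∪
      ⋃ e : {e : V × V // G.Adj e.1 e.2 ∧ e.1 ≠ v ∧ e.2 ≠ v}, D.arc e.1.1 e.1.2 := by
    ext p
    simp only [Drw.rest, mem_setOf_eq, mem_union, mem_iUnion, mem_singleton_iff, Subtype.exists, Prod.exists]
    constructor
    · rintro (⟨w, h1, h2, h3⟩ | ⟨a, b, h1, h2, h3, h4⟩)
      · exact Or.inl ⟨w, ⟨h1, h2⟩, h3⟩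
      · exact Or.inr ⟨a, b, ⟨h1, h2, h3⟩, h4⟩
    · rintro (⟨w, ⟨h1, h2⟩, h3⟩ | ⟨a, b, ⟨h1, h2, h3⟩, h4⟩)
      · exact Or.inl ⟨w, h1, h2, h3⟩
      · exact Or.inr ⟨a, b, h1, h2, h3, h4⟩
  rw [this]
  refine IsClosed.union (isClosed_iUnion_of_finite fun w => isClosed_singleton)
    (isClosed_iUnion_of_finite fun e => (D.isArc e.2.1).isCompact.isClosed)

lemma Drw.pos_notMem_rest (D : Drw G S) {v : V} (hv : v ∈ S) : D.pos v ∉ D.rest v := by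
  rintro (⟨w, h1, h2, h3⟩ | ⟨a, b, h1, h2, h3, h4⟩)
  · exact h2 (D.pos_inj h1 hv h3.symm)
  · rcases D.pos_arc h1 hv h4 with h | h
    · exact h2 h.symm
    · exact h3 h.symm

lemma Drw.arc_rest (D : Drw G S) {v x : V} (h : G.Adj x v) {p : ℂ} (hp : p ∈ D.arc x v)
    (hpx : p ≠ D.pos x) : p ∉ D.rest v := by
  rintro (⟨w, h1, h2, h3⟩ | ⟨a, b, h1, h2, h3, h4⟩)
  · subst h3
    rcases D.pos_arc h h1 hp with rfl | rfl
    · exact hpx rfl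
    · exact h2 rfl
  · have hne : s(x, v) ≠ s(a, b) := by
      intro hh
      have : v ∈ s(a, b) := hh ▸ Sym2.mem_mk_right _ _
      rcases Sym2.mem_iff.1 this with rfl | rfl
      · exact h2 rfl
      · exact h3 rfl
    obtain ⟨k, hk, rfl, h5, h6⟩ := D.inter' h h1 hne hp h4
    rcases h5 with rfl | rfl
    · exact hpx rfl
    · rcases h6 with rfl | rfl
      · exact h2 rfl
      · exact h3 rfl

open Classical in
lemma Drw.redraw (D : Drw G S) {v : V} (hv : v ∈ S) {r : ℝ} (hr : 0 < r)
    (hrest : ∀ p ∈ Metric.closedBall (D.pos v) r, p ∉ D.rest v)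
    (e : V → ℂ) (tail : V → Set ℂ)
    (he : ∀ w, G.Adj v w → e w ∈ Metric.sphere (D.pos v) r)
    (htail : ∀ w, G.Adj v w → IsArc (e w) (D.pos w) (tail w))
    (hsub : ∀ w, G.Adj v w → tail w ⊆ D.arc v w)
    (hN : ∀ w, G.Adj v w → ∀ p ∈ tail w, p ∈ Metric.closedBall (D.pos v) r → p = e w)
    (p : ℂ) (hp : p ∈ Metric.closedBall (D.pos v) r) :
    ∃ D' : Drw G S, D'.pos = Function.update D.pos v p ∧
      (∀ w, G.Adj v w → D'.arc v w = segment ℝ p (e w) ∪ tail w) ∧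
      ∀ a b, a ≠ v → b ≠ v → D'.arc a b = D.arc a b := by
  have hpv : ∀ w, G.Adj v w → D.pos v ∉ tail w := by
    intro w hw hm
    have h1 := hN w hw _ hm (Metric.mem_closedBall_self hr.le)
    have h2 := he w hw
    rw [← h1] at h2
    simp at h2
    exact hr.ne h2
  have htt : ∀ w w', G.Adj v w → G.Adj v w' → w ≠ w' → ∀ q, q ∈ tail w → q ∈ tail w' → False := by
    intro w w' h h' hne q hq hq'
    have hne' : s(v, w) ≠ s(v, w') := by
      intro hh; exact hne (Sym2.congr_right.1 hh)
    obtain ⟨k, hk, rfl, h5, h6⟩ := D.inter' h h' hne' (hsub w h hq) (hsub w' h' hq')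
    rcases h5 with rfl | rfl
    · exact hpv _ h hq
    · rcases h6 with rfl | rfl
      · exact hpv _ h hq
      · exact hne rfl
  have hee : ∀ w w', G.Adj v w → G.Adj v w' → w ≠ w' → e w ≠ e w' := by
    intro w w' h h' hne hh
    exact htt w w' h h' hne (e w) (htail w h).left_mem (hh ▸ (htail w' h').left_mem)
  have hseg : ∀ w, G.Adj v w → segment ℝ p (e w) ⊆ Metric.closedBall (D.pos v) r := fun w hw =>
    (convex_closedBall _ _).segment_subset hp (Metric.sphere_subset_closedBall (he w hw))
  set arc' : V → V → Set ℂ := fun a b =>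
    if a = v then segment ℝ p (e b) ∪ tail b else
      if b = v then segment ℝ p (e a) ∪ tail a else D.arc a b with harc
  have a1 : ∀ b, arc' v b = segment ℝ p (e b) ∪ tail b := fun b => by simp [harc]
  have a2 : ∀ a b, a ≠ v → b ≠ v → arc' a b = D.arc a b := fun a b h h' => by simp [harc, h, h']
  have asymm : ∀ a b, arc' a b = arc' b a := by
    intro a b
    by_cases ha : a = v <;> by_cases hb : b = v <;> simp [harc, ha, hb, D.arc_symm a b]
  have p1 : ∀ k, k ≠ v → Function.update D.pos v p k = D.pos k := fun k hk => by simp [hk]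
  have arcs : ∀ {b}, G.Adj v b → IsArc p (D.pos b) (arc' v b) := by
    intro b h
    rw [a1]
    refine isArc_concat (htail b h) ?_
    intro z hz hz'
    exact hN b h z hz' (hseg b h hz)
  -- intersections of two edges at v
  have ivv : ∀ {b d q}, G.Adj v b → G.Adj v d → b ≠ d → q ∈ arc' v b → q ∈ arc' v d → q = p := by
    intro b d q h h' hne hq hq'
    rw [a1] at hq hq'
    rcases hq with hq | hq <;> rcases hq' with hq' | hq'
    · exact chord hp (he b h) (he d h') (hee b d h h' hne) hq hq'
    · have := hN d h' q hq' (hseg b h hq)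
      subst this
      exact chord hp (he b h) (he d h') (hee b d h h' hne) hq (right_mem_segment _ _ _)
    · have := hN b h q hq (hseg d h' hq')
      subst this
      exact chord hp (he b h) (he d h') (hee b d h h' hne) (right_mem_segment _ _ _) hq'
    · exact (htt b d h h' hne q hq hq').elim
  have ivo : ∀ {b c d q}, G.Adj v b → G.Adj c d → c ≠ v → d ≠ v → q ∈ arc' v b → q ∈ D.arc c d →
      ∃ k ∈ S, q = Function.update D.pos v p k := by
    intro b c d q h h' hc hd hq hq'
    rw [a1] at hq
    have hR : q ∈ D.rest v := Or.inr ⟨c, d, h', hc, hd, hq'⟩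
    rcases hq with hq | hq
    · exact absurd hR (hrest q (hseg b h hq))
    · have hne : s(v, b) ≠ s(c, d) := by
        intro hh
        have : v ∈ s(c, d) := hh ▸ Sym2.mem_mk_left _ _
        rcases Sym2.mem_iff.1 this with rfl | rfl
        · exact hc rfl
        · exact hd rfl
      obtain ⟨k, hk, rfl, h5, h6⟩ := D.inter' h h' hne (hsub b h hq) hq'
      have hkv : k ≠ v := by
        rcases h6 with rfl | rfl
        · exact hc
        · exact hd
      exact ⟨k, hk, (p1 k hkv).symm⟩
  have hpv' : Function.update D.pos v p v = p := by simp
  refine ⟨⟨Function.update D.pos v p, arc', D.adj_mem, ?_, asymm, ?_, ?_, ?_⟩, rfl, fun w _ => a1 w, a2⟩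
  · have aux : ∀ b ∈ S, b ≠ v → p ≠ D.pos b := fun b hb hbv hpb =>
      hrest p hp (Or.inl ⟨b, hb, hbv, hpb⟩)
    intro a ha b hb hab
    by_cases hav : a = v <;> by_cases hbv : b = v
    · rw [hav, hbv]
    · subst hav; rw [hpv', p1 b hbv] at hab; exact absurd hab (aux b hb hbv)
    · subst hbv; rw [hpv', p1 a hav] at hab; exact absurd hab.symm (aux a ha hav)
    · rw [p1 a hav, p1 b hbv] at hab; exact D.pos_inj ha hb hab
  · intro a b h
    by_cases hav : a = v
    · subst hav
      rw [hpv', p1 b h.ne']; exact arcs h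
    · by_cases hbv : b = v
      · subst hbv
        rw [hpv', p1 a hav, asymm]; exact (arcs h.symm).symm
      · rw [p1 a hav, p1 b hbv, a2 a b hav hbv]; exact D.isArc h
  · have c1 : ∀ {b c d q}, G.Adj v b → G.Adj c d → s(v, b) ≠ s(c, d) → q ∈ arc' v b → q ∈ arc' c d →
        ∃ k ∈ S, q = Function.update D.pos v p k := by
      intro b c d q h h' hne hq hq'
      by_cases hc : c = v
      · subst hc
        exact ⟨c, hv, by rw [hpv']; exact ivv h h' (fun hh => hne (by rw [hh])) hq hq'⟩
      · by_cases hd : d = v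
        · subst hd
          rw [asymm] at hq'
          refine ⟨d, hv, by rw [hpv']; exact ivv h h'.symm (fun hh => hne (by rw [hh, Sym2.eq_swap])) hq hq'⟩
        · rw [a2 c d hc hd] at hq'
          exact ivo h h' hc hd hq hq'
    intro a b c d q h h' hne hq hq'
    by_cases ha : a = v
    · subst ha; exact c1 h h' hne hq hq'
    by_cases hb : b = v
    · subst hb; rw [asymm] at hq; rw [Sym2.eq_swap] at hne; exact c1 h.symm h' hne hq hq'
    by_cases hc : c = v
    · subst hc; exact c1 h' h hne.symm hq' hq
    by_cases hd : d = v
    · subst hd; rw [asymm] at hq'; rw [@Sym2.eq_swap _ c] at hne; exact c1 h'.symm h hne.symm hq' hq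
    rw [a2 a b ha hb] at hq
    rw [a2 c d hc hd] at hq'
    obtain ⟨k, hk, rfl, h5, h6⟩ := D.inter' h h' hne hq hq'
    have hkv : k ≠ v := by
      rcases h5 with rfl | rfl
      · exact ha
      · exact hb
    exact ⟨k, hk, (p1 k hkv).symm⟩
  · have c1 : ∀ {b w}, G.Adj v b → w ∈ S → Function.update D.pos v p w ∈ arc' v b → w = v ∨ w = b := by
      intro b w h hw hm
      by_cases hwv : w = v
      · exact Or.inl hwv
      · rw [p1 w hwv, a1] at hm
        rcases hm with hm | hm
        · exact absurd (Or.inl ⟨w, hw, hwv, rfl⟩) (hrest _ (hseg b h hm))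
        · exact D.pos_arc h hw (hsub b h hm)
    intro a b w h hw hm
    by_cases ha : a = v
    · subst ha; exact c1 h hw hm
    by_cases hb : b = v
    · subst hb; rw [asymm] at hm; exact (c1 h.symm hw hm).symm
    rw [a2 a b ha hb] at hm
    by_cases hwv : w = v
    · subst hwv
      rw [hpv'] at hm
      exact absurd (Or.inr ⟨a, b, h, ha, hb, hm⟩) (hrest p hp)
    · rw [p1 w hwv] at hm
      exact D.pos_arc h hw hm

/-- exits through the boundary of a small disc -/
lemma Drw.exits (D : Drw G S) {v : V} {r : ℝ} (hr : 0 < r)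
    (hrest : ∀ p ∈ Metric.closedBall (D.pos v) r, p ∉ D.rest v) (w : V) :
    ∃ (e : ℂ) (tail : Set ℂ), G.Adj v w → e ∈ Metric.sphere (D.pos v) r ∧
      IsArc e (D.pos w) tail ∧ tail ⊆ D.arc v w ∧
      ∀ p ∈ tail, p ∈ Metric.closedBall (D.pos v) r → p = e := by
  by_cases h : G.Adj v w
  swap
  · exact ⟨0, ∅, fun h' => absurd h' h⟩
  obtain ⟨f, hc, hi, h0, h1, hS⟩ := (D.isArc h).symm
  have hn : f 0 ∉ Metric.closedBall (D.pos v) r := by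
    intro hm
    exact hrest _ hm (Or.inl ⟨w, D.adj_mem' h, h.ne', h0⟩)
  obtain ⟨s, hs0, hs1, hs2, hs3⟩ := first_hit zero_le_one hc hn (by rw [h1]; exact Metric.mem_closedBall_self hr.le)
  refine ⟨f s, f '' Icc 0 s, fun _ => ⟨hs2, ?_, ?_, ?_⟩⟩
  · rw [← h0]; exact (isArc_sub hc hi hs0 hs1).symm
  · rw [← hS]; exact image_mono (Icc_subset_Icc_right hs1)
  · rintro p ⟨t, ht, rfl⟩ hm
    rcases eq_or_lt_of_le ht.2 with h | h
    · rw [h]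
    · exact absurd hm (hs3 t ht.1 h)

end

section
variable {V : Type u} {G : SimpleGraph V} {S : Set V}

open Classical in
/-- state of the drawing when `y` has been pulled to the point `g t` of the arc `x y` -/
def Pulled (D : Drw G S) (x y : V) (g : ℝ → ℂ) (t : ℝ) (X : Set ℂ) (D' : Drw G S) : Prop :=
  D'.pos = Function.update D.pos y (g t) ∧ D'.arc x y = g '' Icc 0 t ∧
    (∀ a b, a ≠ y → b ≠ y → D'.arc a b = D.arc a b) ∧
    ∀ w, G.Adj y w → w ≠ x → ∀ p ∈ D'.arc y w, p ∉ X

open Classical in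
lemma pull_step (D : Drw G S) {x y : V} (hxy : G.Adj x y) {g : ℝ → ℂ}
    (hc : ContinuousOn g (Icc 0 1)) (hi : InjOn g (Icc 0 1)) (h0 : g 0 = D.pos x)
    {X : Set ℂ} {t : ℝ} (ht : t ∈ Icc (0:ℝ) 1) {D' : Drw G S} (hD' : Pulled D x y g t X D')
    {r : ℝ} (hr : 0 < r) (hrest : ∀ p ∈ Metric.closedBall (g t) r, p ∉ D.rest y)
    (hX : ∀ p ∈ Metric.closedBall (g t) r, p ∉ X) :
    ∃ s, 0 < s ∧ s ≤ t ∧ g s ∈ Metric.sphere (g t) r ∧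
      (∀ t', 0 ≤ t' → t' < s → g t' ∉ Metric.closedBall (g t) r) ∧
      ∃ D'' : Drw G S, Pulled D x y g s X D'' := by

  obtain ⟨hpos, harc, hsame, hav⟩ := hD'
  have hy : y ∈ S := D.adj_mem' hxy
  have hpy : D'.pos y = g t := by rw [hpos]; simp
  have hpk : ∀ k, k ≠ y → D'.pos k = D.pos k := fun k hk => by rw [hpos]; simp [hk]
  have hrr : D'.rest y = D.rest y := by
    ext p
    constructor
    · rintro (⟨w, h1, h2, h3⟩ | ⟨a, b, h1, h2, h3, h4⟩)
      · exact Or.inl ⟨w, h1, h2, by rw [h3, hpk w h2]⟩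
      · exact Or.inr ⟨a, b, h1, h2, h3, by rwa [← hsame a b h2 h3]⟩
    · rintro (⟨w, h1, h2, h3⟩ | ⟨a, b, h1, h2, h3, h4⟩)
      · exact Or.inl ⟨w, h1, h2, by rw [h3, hpk w h2]⟩
      · exact Or.inr ⟨a, b, h1, h2, h3, by rwa [hsame a b h2 h3]⟩
  rw [← hpy] at hrest hX
  have hrest' : ∀ p ∈ Metric.closedBall (D'.pos y) r, p ∉ D'.rest y := by rw [hrr]; exact hrest
  have hg0 : g 0 ∉ Metric.closedBall (D'.pos y) r := fun hm =>
    hrest _ hm (Or.inl ⟨x, D.adj_mem hxy, hxy.ne, h0⟩)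
  obtain ⟨s, hs0, hs1, hs2, hs3⟩ := first_hit ht.1 (hc.mono (Icc_subset_Icc_right ht.2)) hg0
    (by rw [hpy]; exact Metric.mem_closedBall_self hr.le)
  choose e tail hE using fun w => D'.exits hr hrest' w
  have hs1' : s ≤ 1 := hs1.trans ht.2
  obtain ⟨D'', k1, k2, k3⟩ := D'.redraw hy hr hrest' (Function.update e x (g s))
    (Function.update tail x (g '' Icc 0 s))
    (by
      intro w hw
      by_cases hwx : w = x
      · subst hwx; simpa using hs2
      · rw [Function.update_of_ne hwx]; exact (hE w hw).1)
    (by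
      intro w hw
      by_cases hwx : w = x
      · subst hwx
        simp only [Function.update_self]
        rw [hpk w hxy.ne, ← h0]
        exact (isArc_sub hc hi hs0 hs1').symm
      · rw [Function.update_of_ne hwx, Function.update_of_ne hwx]; exact (hE w hw).2.1)
    (by
      intro w hw
      by_cases hwx : w = x
      · subst hwx
        simp only [Function.update_self]
        rw [D'.arc_symm, harc]
        exact image_mono (Icc_subset_Icc_right hs1)
      · rw [Function.update_of_ne hwx]; exact (hE w hw).2.2.1)
    (by
      intro w hw
      by_cases hwx : w = x
      · subst hwx
        simp only [Function.update_self]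
        rintro p ⟨t', ht', rfl⟩ hm
        rcases eq_or_lt_of_le ht'.2 with h | h
        · rw [h]
        · exact absurd hm (hs3 t' ht'.1 h)
      · rw [Function.update_of_ne hwx, Function.update_of_ne hwx]; exact (hE w hw).2.2.2)
    (g s) (Metric.sphere_subset_closedBall hs2)
  rw [hpy] at hs2 hs3
  refine ⟨s, hs0, hs1, hs2, hs3, D'', ?_, ?_, ?_, ?_⟩
  · rw [k1, hpos]; simp
  · rw [D''.arc_symm, k2 x hxy.symm]
    simp only [Function.update_self, segment_same]
    rw [union_eq_right, singleton_subset_iff]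
    exact ⟨s, ⟨hs0.le, le_rfl⟩, rfl⟩
  · intro a b ha hb
    rw [k3 a b ha hb, hsame a b ha hb]
  · intro w hw hwx p hp
    rw [k2 w hw, Function.update_of_ne hwx, Function.update_of_ne hwx] at hp
    rcases hp with hp | hp
    · apply hX
      rw [hpy]
      refine (convex_closedBall _ _).segment_subset (Metric.sphere_subset_closedBall hs2) ?_ hp
      rw [← hpy]
      exact (Metric.sphere_subset_closedBall (hE w hw).1)
    · exact hav w hw hwx p ((hE w hw).2.2.1 hp)

open Classical in
lemma pull (D : Drw G S) [Finite V] {x y : V} (hxy : G.Adj x y) {g : ℝ → ℂ}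
    (hc : ContinuousOn g (Icc 0 1)) (hi : InjOn g (Icc 0 1)) (h0 : g 0 = D.pos x) (hx0 : D.pos x = 0)
    (h1 : g 1 = D.pos y) (harc : g '' Icc 0 1 = D.arc x y) {u : ℂ} (hu : ‖u‖ = 1)
    (hstr : ∀ t ∈ Icc (0:ℝ) (1/2), g t = (2 * t : ℝ) • u)
    {ρ : ℝ} (hρ : 0 < ρ) (hρ1 : ρ < 1) (hfar : ∀ t ∈ Icc (1/2:ℝ) 1, ρ < ‖g t‖)
    (hav : ∀ w, G.Adj y w → w ≠ x → ∀ p ∈ D.arc y w, ρ < ‖p‖) :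
    ∃ D' : Drw G S, D'.pos = Function.update D.pos y (ρ • u) ∧ D'.arc x y = segment ℝ 0 (ρ • u) ∧
    (∀ a b, a ≠ y → b ≠ y → D'.arc a b = D.arc a b) ∧
    ∀ w, G.Adj y w → w ≠ x → ∀ p ∈ D'.arc y w, ρ ≤ ‖p‖ := by
  set τ := ρ / 2 with hτ
  have hy : y ∈ S := D.adj_mem' hxy
  have gn : ∀ t ∈ Icc (0:ℝ) (1/2), ‖g t‖ = 2 * t := by
    intro t ht
    rw [hstr t ht, norm_smul, hu, mul_one, Real.norm_of_nonneg (by linarith [ht.1])]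
  have gfar : ∀ t, τ < t → t ≤ 1 → ρ < ‖g t‖ := by
    intro t h h'
    rcases le_total t (1/2) with b | b
    · rw [gn t ⟨by linarith, b⟩]; linarith
    · exact hfar t ⟨b, h'⟩
  have gnear : ∀ t, 0 ≤ t → t ≤ τ → ‖g t‖ ≤ ρ := by
    intro t h h'
    rw [gn t ⟨h, by linarith⟩]; linarith
  have gτ : g τ = ρ • u := by
    rw [hstr τ ⟨by linarith, by linarith⟩]; congr 1; rw [hτ]; ring
  have grest : ∀ t, 0 < t → t ≤ 1 → g t ∉ D.rest y := by
    intro t h h'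
    refine D.arc_rest hxy (by rw [← harc]; exact ⟨t, ⟨h.le, h'⟩, rfl⟩) ?_
    rw [← h0]
    intro hh
    exact h.ne' (hi ⟨h.le, h'⟩ (by simp) hh)
  set Sg := {t | τ < t ∧ t ≤ 1 ∧ ∃ D', Pulled D x y g t (Metric.closedBall 0 ρ) D'} with hSg
  have one_mem : (1:ℝ) ∈ Sg := by
    refine ⟨by linarith, le_rfl, D, ?_, harc.symm, fun _ _ _ _ => rfl, ?_⟩
    · rw [h1]; simp
    · intro w hw hwx p hp
      have := hav w hw hwx p hp
      simpa using this
  have hbd : BddBelow Sg := ⟨τ, fun t ht => ht.1.le⟩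
  have hinf1 : sInf Sg ≤ 1 := csInf_le hbd one_mem
  have hinf0 : τ ≤ sInf Sg := le_csInf ⟨1, one_mem⟩ fun t ht => ht.1.le
  have hinf : sInf Sg = τ := by
    by_contra hne
    have hlt : τ < sInf Sg := lt_of_le_of_ne hinf0 (Ne.symm hne)
    set m := sInf Sg
    have hK : IsOpen (D.rest y ∪ Metric.closedBall 0 ρ)ᶜ :=
      ((D.isClosed_rest y).union Metric.isClosed_closedBall).isOpen_compl
    have hm : g m ∈ (D.rest y ∪ Metric.closedBall 0 ρ)ᶜ := by
      rintro (h | h)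
      · exact grest m (by linarith) hinf1 h
      · have := gfar m hlt hinf1
        simp at h; linarith
    obtain ⟨r, hr, hball⟩ := Metric.isOpen_iff.1 hK _ hm
    have hcm := hc m ⟨by linarith, hinf1⟩
    obtain ⟨η, hη, hηc⟩ := Metric.continuousWithinAt_iff.1 hcm (r / 4) (by linarith)
    obtain ⟨t, ht, htm⟩ := exists_lt_of_csInf_lt (⟨1, one_mem⟩ : Sg.Nonempty) (show sInf Sg < m + η by linarith)
    have hmt : m ≤ t := csInf_le hbd ht
    have htI : t ∈ Icc (0:ℝ) 1 := ⟨by linarith [ht.1], ht.2.1⟩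
    have d1 := hηc htI (by rw [Real.dist_eq, abs_of_nonneg] <;> linarith)
    obtain ⟨D', hD'⟩ := ht.2.2
    have hsubb : ∀ p ∈ Metric.closedBall (g t) (r / 2), p ∈ (D.rest y ∪ Metric.closedBall 0 ρ)ᶜ := by
      intro p hp
      apply hball
      rw [Metric.mem_ball]
      rw [Metric.mem_closedBall] at hp
      linarith [dist_triangle p (g t) (g m)]
    obtain ⟨s, hs0, hs1, hs2, hs3, hD''⟩ := pull_step D hxy hc hi h0 htI hD' (r := r / 2) (by linarith)
      (fun p hp h => hsubb p hp (Or.inl h)) (fun p hp h => hsubb p hp (Or.inr h))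
    have hsτ : τ < s := by
      by_contra hle
      push Not at hle
      refine hsubb (g s) (Metric.sphere_subset_closedBall hs2) (Or.inr ?_)
      simpa using gnear s hs0.le hle
    have hms : m ≤ s := csInf_le hbd ⟨hsτ, hs1.trans ht.2.1, hD''⟩
    set t' := max τ (m - η / 2)
    have ht'm : t' < m := max_lt hlt (by linarith)
    have ht'0 : 0 ≤ t' := le_trans (by linarith) (le_max_left _ _)
    have d2 := hηc (show t' ∈ Icc (0:ℝ) 1 from ⟨ht'0, by linarith⟩) (by
      rw [Real.dist_eq, abs_sub_comm, abs_of_nonneg (by linarith)]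
      linarith [le_max_right τ (m - η / 2)])
    apply hs3 t' ht'0 (by linarith)
    rw [Metric.mem_closedBall]
    rw [dist_comm] at d1
    linarith [dist_triangle (g t') (g m) (g t)]
  -- final step
  have hcl := (D.isClosed_rest y).isOpen_compl
  obtain ⟨r, hr, hball⟩ := Metric.isOpen_iff.1 hcl (g τ) (grest τ (by linarith) (by linarith))
  obtain ⟨t, ht, htm⟩ := exists_lt_of_csInf_lt (⟨1, one_mem⟩ : Sg.Nonempty)
    (show sInf Sg < τ + min (r / 8) (1 / 2 - τ) by
      rw [hinf]
      have : 0 < min (r / 8) (1 / 2 - τ) := lt_min (by linarith) (by linarith)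
      linarith)
  have htr : t < τ + r / 8 := lt_of_lt_of_le htm (by linarith [min_le_left (r / 8) (1 / 2 - τ)])
  have hth : t < 1 / 2 := lt_of_lt_of_le htm (by linarith [min_le_right (r / 8) (1 / 2 - τ)])
  have hτt := ht.1
  have htI : t ∈ Icc (0:ℝ) (1/2) := ⟨by linarith, hth.le⟩
  obtain ⟨D', hD'⟩ := ht.2.2
  have hD2 : Pulled D x y g t (Metric.ball 0 ρ) D' :=
    ⟨hD'.1, hD'.2.1, hD'.2.2.1, fun w hw hwx p hp h =>
      hD'.2.2.2 w hw hwx p hp (Metric.ball_subset_closedBall h)⟩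
  have dist_eq : ∀ s ∈ Icc (0:ℝ) (1/2), ∀ s' ∈ Icc (0:ℝ) (1/2), dist (g s) (g s') = 2 * |s - s'| := by
    intro s hs s' hs'
    rw [hstr s hs, hstr s' hs', dist_eq_norm, ← sub_smul, norm_smul, hu, mul_one, Real.norm_eq_abs,
      ← mul_sub, abs_mul, abs_two]
  have hτI : τ ∈ Icc (0:ℝ) (1/2) := ⟨by linarith, by linarith⟩
  obtain ⟨s, hs0, hs1, hs2, hs3, D'', hD''⟩ := pull_step D hxy hc hi h0 ⟨htI.1, ht.2.1⟩ hD2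
    (r := 2 * (t - τ)) (by linarith)
    (by
      intro p hp
      apply hball
      rw [Metric.mem_ball]
      rw [Metric.mem_closedBall] at hp
      have := dist_eq t htI τ hτI
      rw [abs_of_nonneg (by linarith)] at this
      linarith [dist_triangle p (g t) (g τ)])
    (by
      intro p hp h
      rw [Metric.mem_closedBall, dist_comm, dist_eq_norm] at hp
      rw [mem_ball_zero_iff] at h
      have h2 := gn t htI
      have : ‖g t‖ ≤ ‖g t - p‖ + ‖p‖ := by simpa using norm_add_le (g t - p) p
      linarith)
  have hsτ : s = τ := by
    rw [Metric.mem_sphere, dist_eq s ⟨hs0.le, by linarith⟩ t htI, abs_sub_comm, abs_of_nonneg (by linarith)] at hs2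
    linarith
  subst hsτ
  refine ⟨D'', ?_, ?_, hD''.2.2.1, ?_⟩
  · rw [hD''.1, gτ]
  · rw [hD''.2.1, segment_eq_image']
    ext z; constructor
    · rintro ⟨a, ha, rfl⟩
      refine ⟨a / τ, ⟨by have := ha.1; positivity, by rw [div_le_one hs0]; exact ha.2⟩, ?_⟩
      simp only [zero_add, sub_zero]
      rw [hstr a ⟨ha.1, by linarith [ha.2]⟩, smul_smul]
      congr 1
      rw [hτ]; field_simp
    · rintro ⟨a, ha, rfl⟩
      refine ⟨a * τ, ⟨by have := ha.1; positivity, by nlinarith [ha.2]⟩, ?_⟩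
      simp only [zero_add, sub_zero]
      rw [hstr (a * τ) ⟨by have := ha.1; positivity, by nlinarith [ha.2, ha.1]⟩, smul_smul]
      congr 1
      rw [hτ]; ring
  · intro w hw hwx p hp
    have := hD''.2.2.2 w hw hwx p hp
    simpa using this

end

section
variable {V : Type u} {G : SimpleGraph V} {S : Set V}

lemma exists_lin {a b : ℂ} (h : a.re * b.im - a.im * b.re ≠ 0) :
    ∃ L : ℂ →ₗ[ℝ] ℂ, Function.Injective L ∧ L a = 1 ∧ L b = Complex.I := by
  set k := a.re * b.im - a.im * b.re with hk
  refine ⟨{ toFun := fun z => ⟨(z.re * b.im - z.im * b.re) / k, (a.re * z.im - a.im * z.re) / k⟩,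
            map_add' := ?_, map_smul' := ?_ }, ?_, ?_, ?_⟩
  · intro x y; apply Complex.ext <;> simp <;> ring
  · intro m x; apply Complex.ext <;> simp <;> ring
  · rw [injective_iff_map_eq_zero]
    intro z hz
    have h1 := congrArg Complex.re hz
    have h2 := congrArg Complex.im hz
    simp [h] at h1 h2
    have h1 : z.re * b.im - z.im * b.re = 0 := by simpa using h1
    have h2 : a.re * z.im - a.im * z.re = 0 := by simpa using h2
    apply Complex.ext
    · apply mul_left_cancel₀ h
      simp only [Complex.zero_re, mul_zero]
      rw [hk]; linear_combination a.re * h1 + b.re * h2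
    · apply mul_left_cancel₀ h
      simp only [Complex.zero_im, mul_zero]
      rw [hk]; linear_combination a.im * h1 + b.im * h2
  · apply Complex.ext
    · simp [← hk, h]
    · simp; left; ring
  · apply Complex.ext
    · simp; left; ring
    · simp [← hk, h]

lemma noncollinear {c a b d : ℂ} {r : ℝ} (ha : a ∈ Metric.sphere c r) (hb : b ∈ Metric.sphere c r)
    (hd : d ∈ Metric.sphere c r) (hab : a ≠ b) (had : a ≠ d) (hbd : b ≠ d) :
    (a - d).re * (b - d).im - (a - d).im * (b - d).re ≠ 0 := by
  intro h
  have key : ∀ z, z ∈ Metric.sphere c r → (z.re - c.re) ^ 2 + (z.im - c.im) ^ 2 = r ^ 2 := by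
    intro z hz
    rw [mem_sphere_iff_norm] at hz
    rw [← hz, Complex.sq_norm, Complex.normSq_apply]
    simp; ring
  have h1 := key a ha
  have h2 := key b hb
  have h3 := key d hd
  simp only [Complex.sub_re, Complex.sub_im] at h
  have hB : 0 < (b.re - d.re) ^ 2 + (b.im - d.im) ^ 2 := by
    by_contra hle
    apply hbd
    apply Complex.ext <;> nlinarith [sq_nonneg (b.re - d.re), sq_nonneg (b.im - d.im)]
  set B := (b.re - d.re) ^ 2 + (b.im - d.im) ^ 2 with hBd
  set μ := ((a.re - d.re) * (b.re - d.re) + (a.im - d.im) * (b.im - d.im)) / B with hμ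
  have e0 : μ * B = (a.re - d.re) * (b.re - d.re) + (a.im - d.im) * (b.im - d.im) := by
    rw [hμ]; field_simp
  have e1 : a.re - d.re = μ * (b.re - d.re) := by
    apply mul_right_cancel₀ hB.ne'
    linear_combination (-(b.re - d.re)) * e0 + (b.im - d.im) * h + (a.re - d.re) * hBd
  have e2 : a.im - d.im = μ * (b.im - d.im) := by
    apply mul_right_cancel₀ hB.ne'
    linear_combination (-(b.im - d.im)) * e0 - (b.re - d.re) * h + (a.im - d.im) * hBd
  have e3 : μ * (μ - 1) * B = 0 := by
    have ar : a.re = d.re + μ * (b.re - d.re) := by linarith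
    have ai : a.im = d.im + μ * (b.im - d.im) := by linarith
    rw [ar, ai] at h1
    rw [hBd]
    linear_combination h1 - μ * h2 - (1 - μ) * h3
  rcases mul_eq_zero.1 e3 with h4 | h4
  · rcases mul_eq_zero.1 h4 with h5 | h5
    · apply had; apply Complex.ext
      · rw [h5] at e1; linarith
      · rw [h5] at e2; linarith
    · have h6 : μ = 1 := by linarith
      apply hab; apply Complex.ext
      · rw [h6] at e1; linarith
      · rw [h6] at e2; linarith
  · exact hB.ne' h4

structure GoodParam (D : Drw G S) (x y : V) (c : ℂ) (δ : ℝ) (g : ℝ → ℂ) : Prop where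
  cont : ContinuousOn g (Icc 0 1)
  inj : InjOn g (Icc 0 1)
  zero : g 0 = D.pos x
  one : g 1 = D.pos y
  im : g '' Icc 0 1 = D.arc x y
  str : ∀ t ∈ Icc (0:ℝ) (1/2), g t = (2 * t : ℝ) • c
  far : ∀ t ∈ Icc (1/2:ℝ) 1, δ ≤ ‖g t‖

lemma star [Finite V] (D : Drw G S) {x y z i : V} (hx : ∀ w, G.Adj x w ↔ w = y ∨ w = z ∨ w = i)
    (hyz : y ≠ z) (hyi : y ≠ i) (hzi : z ≠ i) :
    ∃ (D' : Drw G S) (δ : ℝ), 0 < δ ∧ D'.pos x = 0 ∧ (∃ g, GoodParam D' x y 1 δ g) ∧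
      (∃ g, GoodParam D' x z Complex.I δ g) ∧ (∀ p ∈ D'.arc x i, ‖p‖ < δ → p.re ≤ 0 ∧ p.im ≤ 0) ∧
      ∀ p ∈ D'.rest x, δ ≤ ‖p‖ := by
  have hxy : G.Adj x y := (hx y).2 (Or.inl rfl)
  have hxz : G.Adj x z := (hx z).2 (Or.inr (Or.inl rfl))
  have hxi : G.Adj x i := (hx i).2 (Or.inr (Or.inr rfl))
  have hxS : x ∈ S := D.adj_mem hxy
  obtain ⟨r', hr', hball⟩ := Metric.isOpen_iff.1 (D.isClosed_rest x).isOpen_compl _ (D.pos_notMem_rest hxS)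
  set r := r' / 2 with hr2
  have hr : 0 < r := by positivity
  have hrest : ∀ p ∈ Metric.closedBall (D.pos x) r, p ∉ D.rest x := fun p hp =>
    hball (Metric.closedBall_subset_ball (by linarith) hp)
  choose e tail hE using fun w => D.exits hr hrest w
  have hee : ∀ w w', G.Adj x w → G.Adj x w' → w ≠ w' → e w ≠ e w' := by
    intro w w' h h' hne hh
    have hne' : s(x, w) ≠ s(x, w') := fun hh => hne (Sym2.congr_right.1 hh)
    obtain ⟨k, hk, hk', h5, h6⟩ := D.inter' h h' hne' ((hE w h).2.2.1 (hE w h).2.1.left_mem)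
      (by rw [hh]; exact ((hE w' h').2.2.1 (hE w' h').2.1.left_mem))
    have hkx : k = x := by
      rcases h5 with rfl | rfl
      · rfl
      · rcases h6 with rfl | rfl
        · rfl
        · exact absurd rfl hne
    have := (hE w h).1
    rw [hk', hkx] at this
    simp at this
    exact hr.ne this
  set a := e y
  set b := e z
  set d := e i
  have ha : a ∈ Metric.sphere (D.pos x) r := (hE y hxy).1
  have hb : b ∈ Metric.sphere (D.pos x) r := (hE z hxz).1
  have hd : d ∈ Metric.sphere (D.pos x) r := (hE i hxi).1
  have hnc := noncollinear ha hb hd (hee y z hxy hxz hyz) (hee y i hxy hxi hyi) (hee z i hxz hxi hzi)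
  set p : ℂ := (1 / 3 : ℝ) • (a + b + d) with hp
  have hpre : p.re = (a.re + b.re + d.re) / 3 := by simp [hp]; ring
  have hpim : p.im = (a.im + b.im + d.im) / 3 := by simp [hp]; ring
  have hcr : (a - p).re * (b - p).im - (a - p).im * (b - p).re ≠ 0 := by
    intro h; apply hnc
    simp only [Complex.sub_re, Complex.sub_im, hpre, hpim] at h ⊢
    linear_combination 3 * h
  have hpN : p ∈ Metric.closedBall (D.pos x) r := by
    rw [mem_closedBall_iff_norm]
    rw [mem_sphere_iff_norm] at ha hb hd
    have : p - D.pos x = (1 / 3 : ℝ) • ((a - D.pos x) + (b - D.pos x) + (d - D.pos x)) := by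
      rw [hp]; simp; ring
    rw [this, norm_smul]
    have := norm_add₃_le (a := a - D.pos x) (b := b - D.pos x) (c := d - D.pos x)
    rw [ha, hb, hd] at this
    norm_num
    linarith
  obtain ⟨L, Linj, La, Lb⟩ := exists_lin hcr
  have Ld : L (d - p) = -1 - Complex.I := by
    have : d - p = -(a - p) - (b - p) := by
      have : (3 : ℂ) * p = a + b + d := by rw [hp]; simp; ring
      linear_combination -this
    rw [this, map_sub, map_neg, La, Lb]
  have hpa : p ≠ a := by intro h; rw [← h] at hcr; simp at hcr
  have hpb : p ≠ b := by intro h; rw [← h] at hcr; simp at hcr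
  have hpd : p ≠ d := by
    intro h; rw [← h, sub_self, map_zero] at Ld
    have := congrArg Complex.re Ld
    simp at this
  obtain ⟨D1, k1, k2, k3⟩ := D.redraw hxS hr hrest e tail (fun w hw => (hE w hw).1)
    (fun w hw => (hE w hw).2.1) (fun w hw => (hE w hw).2.2.1) (fun w hw => (hE w hw).2.2.2) p hpN
  have k1x : D1.pos x = p := by rw [k1]; simp
  have k1w : ∀ w, w ≠ x → D1.pos w = D.pos w := fun w hw => by rw [k1]; simp [hw]
  have hsegtail : ∀ w, G.Adj x w → ∀ q ∈ segment ℝ p (e w), q ∈ tail w → q = e w := by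
    intro w hw q hq hq'
    exact (hE w hw).2.2.2 q hq' ((convex_closedBall _ _).segment_subset hpN
      (Metric.sphere_subset_closedBall (hE w hw).1) hq)
  set φ : ℂ → ℂ := fun q => L (q - p) with hφ
  have φc : Continuous φ := L.continuous_of_finiteDimensional.comp (by fun_prop)
  have φi : Function.Injective φ := fun q q' h => by
    have := Linj h; exact sub_left_injective this
  have φp : φ p = 0 := by simp [hφ]
  set D2 := D1.image φ univ φc.continuousOn φi.injOn (fun _ _ => mem_univ _) (fun _ _ _ => subset_univ _) with hD2
  have D2pos : ∀ w, D2.pos w = φ (D1.pos w) := fun w => rfl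
  have D2arc : ∀ v w, D2.arc v w = φ '' D1.arc v w := fun v w => rfl
  have hx2 : D2.pos x = 0 := by rw [D2pos, k1x, φp]
  have hptail : ∀ w, G.Adj x w → p ≠ e w → (0:ℂ) ∉ φ '' tail w := by
    rintro w hw hne ⟨q, hq, hq0⟩
    rw [← φp] at hq0
    have := φi hq0
    subst this
    exact hne ((hE w hw).2.2.2 _ hq hpN)
  set C := D2.rest x ∪ (φ '' tail y ∪ (φ '' tail z ∪ φ '' tail i)) with hC
  have hCcl : IsClosed C := by
    have := fun w (hw : G.Adj x w) => ((hE w hw).2.1.isCompact.image φc).isClosed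
    exact (D2.isClosed_rest x).union ((this y hxy).union ((this z hxz).union (this i hxi)))
  have h0C : (0:ℂ) ∉ C := by
    rintro (h | h | h | h)
    · rw [← hx2] at h; exact D2.pos_notMem_rest hxS h
    · exact hptail y hxy hpa h
    · exact hptail z hxz hpb h
    · exact hptail i hxi hpd h
  obtain ⟨δ, hδ, hδC⟩ := Metric.isOpen_iff.1 hCcl.isOpen_compl 0 h0C
  have hδ' : ∀ q ∈ C, δ ≤ ‖q‖ := by
    intro q hq
    by_contra hlt
    push Not at hlt
    exact hδC (by simpa using hlt) hq
  have good : ∀ w c, G.Adj x w → p ≠ e w → L (e w - p) = c → (∀ q ∈ φ '' tail w, δ ≤ ‖q‖) →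
      ∃ g, GoodParam D2 x w c δ g := by
    intro w c hw hne hL hfar
    obtain ⟨g, g1, g2, g3, g4, g5, g6, g7⟩ := concat_seg (hE w hw).2.1 hne (hsegtail w hw)
    refine ⟨φ ∘ g, φc.comp_continuousOn g1, φi.comp_injOn g2, ?_, ?_, ?_, ?_, ?_⟩
    · simp [g3, D2pos, k1x]
    · simp [g4, D2pos, k1w w hw.ne']
    · rw [image_comp, g5, D2arc, k2 w hw]
    · intro t ht
      simp only [Function.comp, g6 t ht, hφ, add_sub_cancel_left, map_smul, hL]
    · intro t ht
      exact hfar _ ⟨_, g7 t ht, rfl⟩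
  refine ⟨D2, δ, hδ, hx2, good y 1 hxy hpa La ?_, good z _ hxz hpb Lb ?_, ?_, ?_⟩
  · intro q hq; exact hδ' q (Or.inr (Or.inl hq))
  · intro q hq; exact hδ' q (Or.inr (Or.inr (Or.inl hq)))
  · intro q hq hlt
    rw [D2arc, k2 i hxi, image_union] at hq
    rcases hq with ⟨q', hq', rfl⟩ | hq
    · rw [segment_eq_image'] at hq'
      obtain ⟨t, ht, rfl⟩ := hq'
      have : φ (p + t • (e i - p)) = t • (-1 - Complex.I) := by
        simp only [hφ, add_sub_cancel_left, map_smul]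
        rw [← Ld]
      simp only [this]
      simp
      exact ht.1
    · exact absurd (hδ' q (Or.inr (Or.inr (Or.inr hq)))) (not_le.2 hlt)
  · intro q hq; exact hδ' q (Or.inl hq)

open Classical in
lemma Drw.addEdge {G' : SimpleGraph V} (D : Drw G' S) {y z : V} (hy : y ∈ S) (hz : z ∈ S) {T : Set ℂ}
    (hT : IsArc (D.pos y) (D.pos z) T)
    (h1 : ∀ a b, G'.Adj a b → ∀ p ∈ D.arc a b, p ∈ T → p = D.pos y ∨ p = D.pos z)
    (h2 : ∀ k ∈ S, D.pos k ∈ T → k = y ∨ k = z)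
    (hG : ∀ a b, G.Adj a b → s(a, b) ≠ s(y, z) → G'.Adj a b) :
    ∃ D' : Drw G S, D'.pos = D.pos ∧ D'.arc y z = T ∧
      ∀ a b, s(a, b) ≠ s(y, z) → D'.arc a b = D.arc a b := by
  set arc' : V → V → Set ℂ := fun a b => if s(a, b) = s(y, z) then T else D.arc a b with harc
  have a1 : ∀ a b, s(a, b) = s(y, z) → arc' a b = T := fun a b h => by simp only [harc]; rw [if_pos h]
  have a2 : ∀ a b, s(a, b) ≠ s(y, z) → arc' a b = D.arc a b := fun a b h => by
    simp only [harc]; rw [if_neg h]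
  refine ⟨⟨D.pos, arc', ?_, D.pos_inj, ?_, ?_, ?_, ?_⟩, rfl, a1 y z rfl, a2⟩
  · intro a b h
    by_cases hs : s(a, b) = s(y, z)
    · rcases Sym2.eq_iff.1 hs with ⟨rfl, rfl⟩ | ⟨rfl, rfl⟩ <;> assumption
    · exact D.adj_mem (hG a b h hs)
  · intro a b
    simp only [harc]
    rw [D.arc_symm a b, @Sym2.eq_swap _ a b]
  · intro a b h
    by_cases hs : s(a, b) = s(y, z)
    · rw [a1 a b hs]
      rcases Sym2.eq_iff.1 hs with ⟨rfl, rfl⟩ | ⟨rfl, rfl⟩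
      · exact hT
      · exact hT.symm
    · rw [a2 a b hs]; exact D.isArc (hG a b h hs)
  · intro a b c d p h h' hne hp hp'
    by_cases hs : s(a, b) = s(y, z)
    · have hs' : s(c, d) ≠ s(y, z) := fun hh => hne (hs.trans hh.symm)
      rw [a1 a b hs] at hp
      rw [a2 c d hs'] at hp'
      rcases h1 c d (hG c d h' hs') p hp' hp with h | h
      · exact ⟨y, hy, h⟩
      · exact ⟨z, hz, h⟩
    · rw [a2 a b hs] at hp
      by_cases hs' : s(c, d) = s(y, z)
      · rw [a1 c d hs'] at hp'
        rcases h1 a b (hG a b h hs) p hp hp' with h | h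
        · exact ⟨y, hy, h⟩
        · exact ⟨z, hz, h⟩
      · rw [a2 c d hs'] at hp'
        exact D.inter (hG a b h hs) (hG c d h' hs') hne hp hp'
  · intro a b w h hw hp
    by_cases hs : s(a, b) = s(y, z)
    · rw [a1 a b hs] at hp
      have := h2 w hw hp
      rcases Sym2.eq_iff.1 hs with ⟨rfl, rfl⟩ | ⟨rfl, rfl⟩
      · exact this
      · exact this.symm
    · rw [a2 a b hs] at hp
      exact D.pos_arc (hG a b h hs) hw hp

def Drw.mono {G' : SimpleGraph V} (D : Drw G S) (h : G' ≤ G) : Drw G' S where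
  pos := D.pos
  arc := D.arc
  adj_mem := fun h' => D.adj_mem (h h')
  pos_inj := D.pos_inj
  arc_symm := D.arc_symm
  isArc := fun h' => D.isArc (h h')
  inter := fun h1 h2 => D.inter (h h1) (h h2)
  pos_arc := fun h' => D.pos_arc (h h')

end

section
variable {V : Type u} {G : SimpleGraph V} {S : Set V}

def gau (z : ℂ) : ℝ := max (z.re + z.im) (max (z.im - 2 * z.re) (z.re - 2 * z.im))

structure Norml (D : Drw G S) (x y z : V) : Prop where
  px : D.pos x = 1
  py : D.pos y = Complex.I
  pz : D.pos z = -1 - Complex.I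
  axy : D.arc x y = segment ℝ (1 : ℂ) Complex.I
  axz : D.arc x z = segment ℝ (1 : ℂ) (-1 - Complex.I)
  ayz : D.arc y z = segment ℝ Complex.I (-1 - Complex.I)
  gpos : ∀ k ∈ S, 1 ≤ gau (D.pos k)
  garc : ∀ a b, G.Adj a b → ∀ p ∈ D.arc a b, 1 ≤ gau p

noncomputable def psi (ρ : ℝ) : ℂ →ᵃ[ℝ] ℂ where
  toFun := fun z => ⟨1 - z.re / ρ - 2 * (z.im / ρ), z.re / ρ - z.im / ρ⟩
  linear := { toFun := fun z => ⟨- z.re / ρ - 2 * (z.im / ρ), z.re / ρ - z.im / ρ⟩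
              map_add' := by intro x y; apply Complex.ext <;> simp <;> ring
              map_smul' := by intro x y; apply Complex.ext <;> simp <;> ring }
  map_vadd' := by intro p v; apply Complex.ext <;> simp <;> ring

lemma psi_apply (ρ : ℝ) (z : ℂ) : psi ρ z = ⟨1 - z.re / ρ - 2 * (z.im / ρ), z.re / ρ - z.im / ρ⟩ := rfl

lemma psi_gau {ρ : ℝ} (hρ : 0 < ρ) {p : ℂ} (h : ρ ≤ ‖p‖ ∨ p.re ≤ 0 ∨ p.im ≤ 0 ∨ ρ ≤ p.re + p.im) :
    1 ≤ gau (psi ρ p) := by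
  by_contra hlt
  push Not at hlt
  simp only [gau, psi_apply, max_lt_iff] at hlt
  obtain ⟨h1, h2, h3⟩ := hlt
  have e1 : p.re / ρ * ρ = p.re := by field_simp
  have e2 : p.im / ρ * ρ = p.im := by field_simp
  set s := p.re / ρ
  set t := p.im / ρ
  have hs : 0 < s := by linarith
  have ht : 0 < t := by linarith
  have hst : s + t < 1 := by linarith
  have hp1 : 0 < p.re := by rw [← e1]; positivity
  have hp2 : 0 < p.im := by rw [← e2]; positivity
  have hp3 : p.re + p.im < ρ := by rw [← e1, ← e2]; nlinarith
  have := Complex.norm_le_abs_re_add_abs_im p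
  rw [abs_of_pos hp1, abs_of_pos hp2] at this
  rcases h with h | h | h | h <;> linarith

lemma psi_inj {ρ : ℝ} (hρ : 0 < ρ) : Function.Injective (psi ρ) := by
  intro p q h
  have h1 := congrArg Complex.re h
  have h2 := congrArg Complex.im h
  simp only [psi_apply] at h1 h2
  have e1 : p.re / ρ = q.re / ρ := by linarith
  have e2 : p.im / ρ = q.im / ρ := by linarith
  apply Complex.ext
  · field_simp at e1; exact e1
  · field_simp at e2; exact e2

lemma mem_T {ρ : ℝ} (hρ : 0 < ρ) {p : ℂ} (hp : p ∈ segment ℝ ((ρ : ℝ) • (1:ℂ)) ((ρ:ℝ) • Complex.I)) :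
    0 ≤ p.re ∧ 0 ≤ p.im ∧ p.re + p.im = ρ := by
  obtain ⟨a, b, ha, hb, hab, rfl⟩ := hp
  simp
  refine ⟨by positivity, by positivity, ?_⟩
  rw [← add_mul, hab, one_mul]

lemma T_end {ρ : ℝ} (hρ : 0 < ρ) {p : ℂ} (hp : p ∈ segment ℝ ((ρ : ℝ) • (1:ℂ)) ((ρ:ℝ) • Complex.I))
    (h : ρ ≤ ‖p‖ ∨ p.re ≤ 0 ∨ p.im ≤ 0) : p = (ρ : ℝ) • (1:ℂ) ∨ p = (ρ:ℝ) • Complex.I := by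
  obtain ⟨h1, h2, h3⟩ := mem_T hρ hp
  have key : p.re = 0 ∨ p.im = 0 := by
    rcases h with h | h | h
    · have h4 : ρ ^ 2 ≤ ‖p‖ ^ 2 := by gcongr
      rw [Complex.sq_norm, Complex.normSq_apply] at h4
      rw [← mul_eq_zero]
      have := mul_nonneg h1 h2
      subst h3
      nlinarith
    · left; linarith
    · right; linarith
  rcases key with h | h
  · right; apply Complex.ext <;> simp <;> linarith
  · left; apply Complex.ext <;> simp <;> linarith

lemma normal [Finite V] (D : Drw G S) {x y z i : V} (hx : ∀ w, G.Adj x w ↔ w = y ∨ w = z ∨ w = i)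
    (hadj : G.Adj y z) (hyi : y ≠ i) (hzi : z ≠ i) : ∃ D' : Drw G S, Norml D' x y z := by
  classical
  have hyz : y ≠ z := hadj.ne
  have hxy : G.Adj x y := (hx y).2 (Or.inl rfl)
  have hxz : G.Adj x z := (hx z).2 (Or.inr (Or.inl rfl))
  have hyx := hxy.ne'
  have hzx := hxz.ne'
  have hxS := D.adj_mem hxy
  have hyS := D.adj_mem hadj
  have hzS := D.adj_mem' hadj
  set G' := G.deleteEdges {s(y, z)} with hG'
  have hG'a : ∀ a b, G'.Adj a b ↔ G.Adj a b ∧ s(a, b) ≠ s(y, z) := by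
    intro a b; rw [hG']; rw [SimpleGraph.deleteEdges_adj]; simp
  have hx' : ∀ w, G'.Adj x w ↔ w = y ∨ w = z ∨ w = i := by
    intro w; rw [hG'a, hx]
    constructor
    · exact fun h => h.1
    · refine fun h => ⟨h, fun hh => ?_⟩
      have : x ∈ s(y, z) := hh ▸ Sym2.mem_mk_left _ _
      rcases Sym2.mem_iff.1 this with h | h
      · exact hyx h.symm
      · exact hzx h.symm
  have hxy' : G'.Adj x y := (hx' y).2 (Or.inl rfl)
  have hxz' : G'.Adj x z := (hx' z).2 (Or.inr (Or.inl rfl))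
  obtain ⟨D1, δ, hδ, h1x, ⟨g1, hg1⟩, ⟨g2, hg2⟩, hix, hrest⟩ :=
    star (D.mono (G' := G') (G.deleteEdges_le _)) hx' hyz hyi hzi
  set ρ := min δ 1 / 2 with hρd
  have hmin : 0 < min δ 1 := lt_min hδ one_pos
  have hρ : 0 < ρ := by positivity
  have hρ1 : ρ < 1 := by have := min_le_right δ 1; linarith
  have hρδ : ρ < δ := by have := min_le_left δ 1; linarith
  obtain ⟨D2, p2, a2, u2, f2⟩ := pull D1 hxy' hg1.cont hg1.inj hg1.zero h1x hg1.one hg1.im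
    (u := 1) (by simp) hg1.str hρ hρ1 (fun t ht => hρδ.trans_le (hg1.far t ht))
    (fun w hw hwx p hp => hρδ.trans_le (hrest p (Or.inr ⟨y, w, hw, hyx, hwx, hp⟩)))
  have h2x : D2.pos x = 0 := by rw [p2, Function.update_of_ne hyx.symm, h1x]
  have hnyz : ¬ G'.Adj z y := by rw [hG'a]; rintro ⟨_, h⟩; exact h Sym2.eq_swap
  obtain ⟨D3, p3, a3, u3, f3⟩ := pull D2 hxz' hg2.cont hg2.inj (by rw [hg2.zero, h1x, h2x]) h2x
    (by rw [hg2.one, p2, Function.update_of_ne hyz.symm]) (by rw [u2 x z hyx.symm hyz.symm, hg2.im])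
    (u := Complex.I) (by simp) hg2.str hρ hρ1 (fun t ht => hρδ.trans_le (hg2.far t ht))
    (fun w hw hwx p hp => by
      have hwy : w ≠ y := by rintro rfl; exact hnyz hw
      rw [u2 z w hyz.symm hwy] at hp
      exact hρδ.trans_le (hrest p (Or.inr ⟨z, w, hw, hzx, hwx, hp⟩)))
  have h3x : D3.pos x = 0 := by rw [p3, Function.update_of_ne hzx.symm, h2x]
  have h3y : D3.pos y = (ρ:ℝ) • (1:ℂ) := by
    rw [p3, Function.update_of_ne hyz, p2, Function.update_self]
  have h3z : D3.pos z = (ρ:ℝ) • Complex.I := by rw [p3, Function.update_self]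
  have h3xy : D3.arc x y = segment ℝ 0 ((ρ:ℝ) • (1:ℂ)) := by rw [u3 x y hzx.symm hyz, a2]
  -- position of arcs
  have key0 : ∀ b, G'.Adj x b → ∀ p ∈ D3.arc x b, ρ ≤ ‖p‖ ∨ p.re ≤ 0 ∨ p.im ≤ 0 := by
    intro b h p hp
    rcases (hx' b).1 h with rfl | rfl | rfl
    · rw [h3xy] at hp
      obtain ⟨s, t, hs, ht, hst, rfl⟩ := hp
      right; right; simp
    · rw [a3] at hp
      obtain ⟨s, t, hs, ht, hst, rfl⟩ := hp
      right; left; simp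
    · rw [u3 x _ hzx.symm hzi.symm, u2 x _ hyx.symm hyi.symm] at hp
      by_cases hn : ‖p‖ < δ
      · exact Or.inr (Or.inl (hix p hp hn).1)
      · left; linarith
  have keyz : ∀ b, G'.Adj z b → b ≠ x → ∀ p ∈ D3.arc z b, ρ ≤ ‖p‖ := f3
  have keyy : ∀ b, G'.Adj y b → b ≠ x → ∀ p ∈ D3.arc y b, ρ ≤ ‖p‖ := by
    intro b h hb p hp
    have hbz : b ≠ z := by rintro rfl; exact hnyz h.symm
    rw [u3 y b hyz hbz] at hp
    exact f2 b h hb p hp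
  have key : ∀ a b, G'.Adj a b → ∀ p ∈ D3.arc a b, ρ ≤ ‖p‖ ∨ p.re ≤ 0 ∨ p.im ≤ 0 := by
    intro a b h p hp
    by_cases hax : a = x
    · subst hax; exact key0 b h p hp
    by_cases hbx : b = x
    · subst hbx; rw [D3.arc_symm] at hp; exact key0 a h.symm p hp
    left
    by_cases hay : a = y
    · subst hay; exact keyy b h hbx p hp
    by_cases hby : b = y
    · subst hby; rw [D3.arc_symm] at hp; exact keyy a h.symm hax p hp
    by_cases haz : a = z
    · subst haz; exact keyz b h hbx p hp
    by_cases hbz : b = z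
    · subst hbz; rw [D3.arc_symm] at hp; exact keyz a h.symm hax p hp
    rw [u3 a b haz hbz, u2 a b hay hby] at hp
    exact hρδ.le.trans (hrest p (Or.inr ⟨a, b, h, hax, hbx, hp⟩))
  have keyp : ∀ k ∈ S, ρ ≤ ‖D3.pos k‖ ∨ (D3.pos k).re ≤ 0 ∨ (D3.pos k).im ≤ 0 := by
    intro k hk
    by_cases hkx : k = x
    · subst hkx; rw [h3x]; simp
    by_cases hky : k = y
    · subst hky; rw [h3y]; simp
    by_cases hkz : k = z
    · subst hkz; rw [h3z]; simp
    left
    have := hrest (D1.pos k) (Or.inl ⟨k, hk, hkx, rfl⟩)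
    rw [p3, Function.update_of_ne hkz, p2, Function.update_of_ne hky]
    exact hρδ.le.trans this
  have hT : IsArc (D3.pos y) (D3.pos z) (segment ℝ ((ρ : ℝ) • (1:ℂ)) ((ρ:ℝ) • Complex.I)) := by
    rw [h3y, h3z]
    apply isArc_segment
    intro h
    have := congrArg Complex.re h
    simp at this
    exact hρ.ne' this
  obtain ⟨D4, p4, a4, u4⟩ := D3.addEdge (G := G) hyS hzS hT
    (fun a b h p hp hpT => by rw [h3y, h3z]; exact T_end hρ hpT (key a b h p hp))
    (fun k hk hpT => by
      rcases T_end hρ hpT (keyp k hk) with h | h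
      · left; exact D3.pos_inj hk hyS (by rw [h, h3y])
      · right; exact D3.pos_inj hk hzS (by rw [h, h3z]))
    (fun a b h h' => (hG'a a b).2 ⟨h, h'⟩)
  have key4 : ∀ a b, G.Adj a b → ∀ p ∈ D4.arc a b, ρ ≤ ‖p‖ ∨ p.re ≤ 0 ∨ p.im ≤ 0 ∨ ρ ≤ p.re + p.im := by
    intro a b h p hp
    by_cases hs : s(a, b) = s(y, z)
    · have : D4.arc a b = D4.arc y z := by
        rcases Sym2.eq_iff.1 hs with ⟨rfl, rfl⟩ | ⟨rfl, rfl⟩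
        · rfl
        · exact D4.arc_symm _ _
      rw [this, a4] at hp
      exact Or.inr (Or.inr (Or.inr (mem_T hρ hp).2.2.ge))
    · rw [u4 a b hs] at hp
      rcases key a b ((hG'a a b).2 ⟨h, hs⟩) p hp with h | h | h
      · exact Or.inl h
      · exact Or.inr (Or.inl h)
      · exact Or.inr (Or.inr (Or.inl h))
  have ψx : psi ρ 0 = 1 := by rw [psi_apply]; apply Complex.ext <;> simp
  have ψy : psi ρ ((ρ:ℝ) • (1:ℂ)) = Complex.I := by
    rw [psi_apply]; apply Complex.ext <;> simp [hρ.ne']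
  have ψz : psi ρ ((ρ:ℝ) • Complex.I) = -1 - Complex.I := by
    rw [psi_apply]; apply Complex.ext <;> simp [hρ.ne'] ; norm_num
  refine ⟨D4.image (psi ρ) univ (psi ρ).continuous_of_finiteDimensional.continuousOn (psi_inj hρ).injOn
    (fun _ _ => mem_univ _) (fun _ _ _ => subset_univ _), ?_, ?_, ?_, ?_, ?_, ?_, ?_, ?_⟩
  · change psi ρ (D4.pos x) = _; rw [p4, h3x, ψx]
  · change psi ρ (D4.pos y) = _; rw [p4, h3y, ψy]
  · change psi ρ (D4.pos z) = _; rw [p4, h3z, ψz]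
  · change psi ρ '' (D4.arc x y) = _
    rw [u4 x y ((hG'a x y).1 hxy').2, h3xy, image_segment, ψx, ψy]
  · change psi ρ '' (D4.arc x z) = _
    rw [u4 x z ((hG'a x z).1 hxz').2, a3, image_segment, ψx, ψz]
  · change psi ρ '' (D4.arc y z) = _
    rw [a4, image_segment, ψy, ψz]
  · intro k hk
    change 1 ≤ gau (psi ρ (D4.pos k))
    rw [p4]
    apply psi_gau hρ
    rcases keyp k hk with h | h | h
    · exact Or.inl h
    · exact Or.inr (Or.inl h)
    · exact Or.inr (Or.inr (Or.inl h))
  · rintro a b h p ⟨q, hq, rfl⟩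
    exact psi_gau hρ (key4 a b h q hq)

/-- the version with the roles of `x` and `y` exchanged -/
lemma normal' [Finite V] (D : Drw G S) {x y z i : V} (hy : ∀ w, G.Adj y w ↔ w = x ∨ w = z ∨ w = i)
    (hadj : G.Adj x z) (hxi : x ≠ i) (hzi : z ≠ i) : ∃ D' : Drw G S, Norml D' x y z := by
  obtain ⟨D1, h⟩ := normal D hy hadj hxi hzi
  set sw : ℂ →ₗ[ℝ] ℂ := { toFun := fun z => ⟨z.im, z.re⟩
                          map_add' := by intro x y; apply Complex.ext <;> simp
                          map_smul' := by intro x y; apply Complex.ext <;> simp } with hsw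
  have sa : ∀ z, sw z = ⟨z.im, z.re⟩ := fun z => rfl
  have sinj : Function.Injective sw := by
    intro p q h
    have h1 := congrArg Complex.re h
    have h2 := congrArg Complex.im h
    exact Complex.ext h2 h1
  have sg : ∀ z, gau (sw z) = gau z := by
    intro z
    simp only [sa, gau]
    rw [add_comm, max_comm (z.re - 2 * z.im)]
  have s1 : sw 1 = Complex.I := by rw [sa]; apply Complex.ext <;> simp
  have s2 : sw Complex.I = 1 := by rw [sa]; apply Complex.ext <;> simp
  have s3 : sw (-1 - Complex.I) = -1 - Complex.I := by rw [sa]; apply Complex.ext <;> simp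
  have hseg : ∀ p q, sw '' segment ℝ p q = segment ℝ (sw p) (sw q) := fun p q =>
    image_segment ℝ sw.toAffineMap p q
  refine ⟨D1.image sw univ sw.continuous_of_finiteDimensional.continuousOn sinj.injOn
    (fun _ _ => mem_univ _) (fun _ _ _ => subset_univ _), ?_, ?_, ?_, ?_, ?_, ?_, ?_, ?_⟩
  · change sw (D1.pos x) = _; rw [h.py, s2]
  · change sw (D1.pos y) = _; rw [h.px, s1]
  · change sw (D1.pos z) = _; rw [h.pz, s3]
  · change sw '' (D1.arc x y) = _
    rw [D1.arc_symm, h.axy, hseg, s1, s2, segment_symm]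
  · change sw '' (D1.arc x z) = _
    rw [h.ayz, hseg, s2, s3]
  · change sw '' (D1.arc y z) = _
    rw [h.axz, hseg, s1, s3]
  · intro k hk
    change 1 ≤ gau (sw (D1.pos k))
    rw [sg]; exact h.gpos k hk
  · rintro a b hab p ⟨q, hq, rfl⟩
    rw [sg]; exact h.garc a b hab q hq

end

section
variable {V : Type u}

lemma glue {A B : SimpleGraph V} {S₁ S₂ : Set V} (D₁ : Drw A S₁) (D₂ : Drw B S₂)
    (hU : ∀ v, v ∈ S₁ ∨ v ∈ S₂) (hpos : ∀ v, v ∈ S₁ → v ∈ S₂ → D₁.pos v = D₂.pos v)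
    (harc : ∀ u v, A.Adj u v → B.Adj u v → D₁.arc u v = D₂.arc u v)
    (P₁ P₂ : ℂ → Prop) (h₁p : ∀ v ∈ S₁, P₁ (D₁.pos v)) (h₂p : ∀ v ∈ S₂, P₂ (D₂.pos v))
    (h₁a : ∀ u v, A.Adj u v → ∀ p ∈ D₁.arc u v, P₁ p) (h₂a : ∀ u v, B.Adj u v → ∀ p ∈ D₂.arc u v, P₂ p)
    (hT : ∀ p, P₁ p → P₂ p → ∃ u v, A.Adj u v ∧ B.Adj u v ∧ p ∈ D₁.arc u v) :
    Nonempty (Drw (A ⊔ B) univ) := by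
  classical
  set pos : V → ℂ := fun v => if v ∈ S₁ then D₁.pos v else D₂.pos v with hposd
  set arc : V → V → Set ℂ := fun u v => if A.Adj u v then D₁.arc u v else D₂.arc u v with harcd
  have p1 : ∀ v ∈ S₁, pos v = D₁.pos v := fun v hv => by simp [hposd, hv]
  have p2 : ∀ v ∈ S₂, pos v = D₂.pos v := fun v hv => by
    by_cases h : v ∈ S₁
    · rw [p1 v h, hpos v h hv]
    · simp [hposd, h]
  have a1 : ∀ u v, A.Adj u v → arc u v = D₁.arc u v := fun u v h => by simp [harcd, h]
  have a2 : ∀ u v, B.Adj u v → arc u v = D₂.arc u v := fun u v h => by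
    by_cases h' : A.Adj u v
    · rw [a1 u v h', harc u v h' h]
    · simp [harcd, h']
  have symm : ∀ u v, arc u v = arc v u := by
    intro u v
    simp only [harcd]
    rw [A.adj_comm u v, D₁.arc_symm, D₂.arc_symm]
  -- a point on both drawings
  have w1 : ∀ v ∈ S₁, P₂ (D₁.pos v) → v ∈ S₂ := by
    intro v hv hP
    obtain ⟨a, b, h, h', hm⟩ := hT _ (h₁p v hv) hP
    rcases D₁.pos_arc h hv hm with rfl | rfl
    · exact D₂.adj_mem h'
    · exact D₂.adj_mem' h'
  have w2 : ∀ v ∈ S₂, P₁ (D₂.pos v) → v ∈ S₁ := by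
    intro v hv hP
    obtain ⟨a, b, h, h', hm⟩ := hT _ hP (h₂p v hv)
    rw [harc a b h h'] at hm
    rcases D₂.pos_arc h' hv hm with rfl | rfl
    · exact D₁.adj_mem h
    · exact D₁.adj_mem' h
  have iAB : ∀ {a b c d p}, A.Adj a b → B.Adj c d → s(a, b) ≠ s(c, d) → p ∈ arc a b → p ∈ arc c d →
      ∃ k ∈ (univ : Set V), p = pos k := by
    intro a b c d p h h' hne hp hp'
    rw [a1 a b h] at hp
    have hp2 := hp'
    rw [a2 c d h'] at hp'
    obtain ⟨u, v, hu, hu', hm⟩ := hT p (h₁a a b h p hp) (h₂a c d h' p hp')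
    by_cases hs : s(a, b) = s(u, v)
    · rw [harc u v hu hu'] at hm
      rw [hs] at hne
      obtain ⟨k, hk, hkk⟩ := D₂.inter hu' h' hne hm hp'
      exact ⟨k, mem_univ _, by rw [p2 k hk, hkk]⟩
    · obtain ⟨k, hk, hkk⟩ := D₁.inter h hu hs hp hm
      exact ⟨k, mem_univ _, by rw [p1 k hk, hkk]⟩
  have mixed : ∀ a b, a ∈ S₁ → b ∈ S₂ → pos a = pos b → a = b := by
    intro a b ha hb hab
    have : P₁ (D₂.pos b) := by rw [← p2 b hb, ← hab, p1 a ha]; exact h₁p a ha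
    have hb' := w2 b hb this
    rw [p1 a ha, p1 b hb'] at hab
    exact D₁.pos_inj ha hb' hab
  refine ⟨⟨pos, arc, fun _ => mem_univ _, ?_, symm, ?_, ?_, ?_⟩⟩
  · intro a _ b _ hab
    rcases hU a with ha | ha <;> rcases hU b with hb | hb
    · rw [p1 a ha, p1 b hb] at hab; exact D₁.pos_inj ha hb hab
    · exact mixed a b ha hb hab
    · exact (mixed b a hb ha hab.symm).symm
    · rw [p2 a ha, p2 b hb] at hab; exact D₂.pos_inj ha hb hab
  · rintro a b (h | h)
    · rw [p1 a (D₁.adj_mem h), p1 b (D₁.adj_mem' h), a1 a b h]; exact D₁.isArc h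
    · rw [p2 a (D₂.adj_mem h), p2 b (D₂.adj_mem' h), a2 a b h]; exact D₂.isArc h
  · rintro a b c d p (h | h) (h' | h') hne hp hp'
    · rw [a1 a b h] at hp; rw [a1 c d h'] at hp'
      obtain ⟨k, hk, hkk⟩ := D₁.inter h h' hne hp hp'
      exact ⟨k, mem_univ _, by rw [p1 k hk, hkk]⟩
    · exact iAB h h' hne hp hp'
    · exact iAB h' h hne.symm hp' hp
    · rw [a2 a b h] at hp; rw [a2 c d h'] at hp'
      obtain ⟨k, hk, hkk⟩ := D₂.inter h h' hne hp hp'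
      exact ⟨k, mem_univ _, by rw [p2 k hk, hkk]⟩
  · rintro a b w (h | h) - hm
    · rw [a1 a b h] at hm
      have hw : w ∈ S₁ := by
        rcases hU w with hw | hw
        · exact hw
        · apply w2 w hw; rw [← p2 w hw]; exact h₁a a b h _ hm
      rw [p1 w hw] at hm
      exact D₁.pos_arc h hw hm
    · rw [a2 a b h] at hm
      have hw : w ∈ S₂ := by
        rcases hU w with hw | hw
        · apply w1 w hw; rw [← p1 w hw]; exact h₂a a b h _ hm
        · exact hw
      rw [p2 w hw] at hm
      exact D₂.pos_arc h hw hm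

lemma continuous_gau : Continuous gau := by
  unfold gau
  fun_prop

lemma gau_smul {c : ℝ} (hc : 0 ≤ c) (z : ℂ) : gau (c • z) = c * gau z := by
  unfold gau
  rw [mul_max_of_nonneg _ _ hc, mul_max_of_nonneg _ _ hc]
  simp only [Complex.smul_re, Complex.smul_im, smul_eq_mul]
  congr 1
  · ring
  · congr 1 <;> ring

noncomputable def ginv (z : ℂ) : ℂ := ((gau z) ^ 2)⁻¹ • z

lemma gau_ginv {z : ℂ} (hz : 1 ≤ gau z) : gau (ginv z) = (gau z)⁻¹ := by
  unfold ginv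
  rw [gau_smul (by positivity)]
  field_simp

lemma ginv_injOn : InjOn ginv {z | 1 ≤ gau z} := by
  intro p hp q hq h
  have h1 := congrArg gau h
  rw [gau_ginv hp, gau_ginv hq, inv_inj] at h1
  unfold ginv at h
  rw [h1] at h
  have hq' : 1 ≤ gau q := hq
  have : ((gau q) ^ 2)⁻¹ ≠ 0 := by positivity
  exact smul_right_injective ℂ this h

lemma ginv_cont : ContinuousOn ginv {z | 1 ≤ gau z} := by
  have h : ContinuousOn (fun z : ℂ => ((gau z) ^ 2)⁻¹) {z | 1 ≤ gau z} := by
    refine ContinuousOn.inv₀ (continuous_gau.pow 2).continuousOn ?_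
    intro x hx
    have hx' : 1 ≤ gau x := hx
    positivity
  exact h.smul continuousOn_id

lemma ginv_fix {z : ℂ} (hz : gau z = 1) : ginv z = z := by simp [ginv, hz]

lemma seg1 {p : ℂ} (hp : p ∈ segment ℝ (1 : ℂ) Complex.I) : gau p = 1 := by
  obtain ⟨a, b, ha, hb, hab, rfl⟩ := hp
  simp [gau, hab]
  constructor <;> linarith

lemma seg2 {p : ℂ} (hp : p ∈ segment ℝ (1 : ℂ) (-1 - Complex.I)) : gau p = 1 := by
  obtain ⟨a, b, ha, hb, hab, rfl⟩ := hp
  have : b = 1 - a := by linarith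
  subst this
  simp [gau]
  refine le_antisymm (max_le (by linarith) (max_le (by linarith) (by linarith))) ?_
  exact le_max_of_le_right (le_max_of_le_right (by linarith))

lemma seg3 {p : ℂ} (hp : p ∈ segment ℝ Complex.I (-1 - Complex.I)) : gau p = 1 := by
  obtain ⟨a, b, ha, hb, hab, rfl⟩ := hp
  have : b = 1 - a := by linarith
  subst this
  simp [gau]
  refine le_antisymm (max_le (by linarith) (max_le (by linarith) (by linarith))) ?_
  exact le_max_of_le_right (le_max_of_le_left (by linarith))

lemma segs {p : ℂ} (hp : gau p = 1) : p ∈ segment ℝ (1 : ℂ) Complex.I ∨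
    p ∈ segment ℝ (1 : ℂ) (-1 - Complex.I) ∨ p ∈ segment ℝ Complex.I (-1 - Complex.I) := by
  have h1 : p.re + p.im ≤ 1 := hp ▸ le_max_left _ _
  have h2 : p.im - 2 * p.re ≤ 1 := hp ▸ le_max_of_le_right (le_max_left _ _)
  have h3 : p.re - 2 * p.im ≤ 1 := hp ▸ le_max_of_le_right (le_max_right _ _)
  have h : p.re + p.im = 1 ∨ p.re - 2 * p.im = 1 ∨ p.im - 2 * p.re = 1 := by
    by_contra hh
    push Not at hh
    have : gau p < 1 := max_lt (lt_of_le_of_ne h1 hh.1)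
      (max_lt (lt_of_le_of_ne h2 hh.2.2) (lt_of_le_of_ne h3 hh.2.1))
    linarith
  rcases h with h | h | h
  · left
    refine ⟨p.re, p.im, by linarith, by linarith, h, ?_⟩
    apply Complex.ext <;> simp
  · right; left
    refine ⟨1 + p.im, - p.im, by linarith, by linarith, by ring, ?_⟩
    apply Complex.ext <;> simp
    linarith
  · right; right
    refine ⟨1 + p.re, - p.re, by linarith, by linarith, by ring, ?_⟩
    apply Complex.ext <;> simp
    linarith

lemma glue_norml {A B : SimpleGraph V} {S₁ S₂ : Set V} {x y z : V} (D₁ : Drw A S₁) (D₂ : Drw B S₂)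
    (N₁ : Norml D₁ x y z) (N₂ : Norml D₂ x y z)
    (hU : ∀ v, v ∈ S₁ ∨ v ∈ S₂) (hI : ∀ v, v ∈ S₁ → v ∈ S₂ → v = x ∨ v = y ∨ v = z)
    (hA1 : A.Adj x y) (hA2 : A.Adj x z) (hA3 : A.Adj y z)
    (hB1 : B.Adj x y) (hB2 : B.Adj x z) (hB3 : B.Adj y z) : Nonempty (Drw (A ⊔ B) univ) := by
  set D := D₁.image ginv {z | 1 ≤ gau z} ginv_cont ginv_injOn N₁.gpos N₁.garc with hD
  have fix : ∀ X : Set ℂ, (∀ p ∈ X, gau p = 1) → ginv '' X = X := by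
    intro X hX
    calc ginv '' X = id '' X := image_congr fun p hp => ginv_fix (hX p hp)
      _ = X := image_id X
  have e1 : D.arc x y = segment ℝ (1:ℂ) Complex.I := by
    change ginv '' D₁.arc x y = _
    rw [N₁.axy]; exact fix _ fun p hp => seg1 hp
  have e2 : D.arc x z = segment ℝ (1 : ℂ) (-1 - Complex.I) := by
    change ginv '' D₁.arc x z = _
    rw [N₁.axz]; exact fix _ fun p hp => seg2 hp
  have e3 : D.arc y z = segment ℝ Complex.I (-1 - Complex.I) := by
    change ginv '' D₁.arc y z = _
    rw [N₁.ayz]; exact fix _ fun p hp => seg3 hp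
  have le : ∀ q, 1 ≤ gau q → gau (ginv q) ≤ 1 := by
    intro q hq
    rw [gau_ginv hq]
    exact inv_le_one_of_one_le₀ hq
  refine glue D D₂ hU ?_ ?_ (fun p => gau p ≤ 1) (fun p => 1 ≤ gau p) ?_ N₂.gpos ?_ N₂.garc ?_
  · intro v h h'
    change ginv (D₁.pos v) = _
    rcases hI v h h' with rfl | rfl | rfl
    · rw [N₁.px, N₂.px]; exact ginv_fix (seg1 (left_mem_segment _ _ _))
    · rw [N₁.py, N₂.py]; exact ginv_fix (seg1 (right_mem_segment _ _ _))
    · rw [N₁.pz, N₂.pz]; exact ginv_fix (seg2 (right_mem_segment _ _ _))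
  · intro u v h h'
    have hu := hI u (D.adj_mem h) (D₂.adj_mem h')
    have hv := hI v (D.adj_mem' h) (D₂.adj_mem' h')
    rcases hu with rfl | rfl | rfl <;> rcases hv with rfl | rfl | rfl
    · exact absurd rfl h.ne
    · rw [e1, N₂.axy]
    · rw [e2, N₂.axz]
    · rw [D.arc_symm, D₂.arc_symm, e1, N₂.axy]
    · exact absurd rfl h.ne
    · rw [e3, N₂.ayz]
    · rw [D.arc_symm, D₂.arc_symm, e2, N₂.axz]
    · rw [D.arc_symm, D₂.arc_symm, e3, N₂.ayz]
    · exact absurd rfl h.ne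
  · intro v hv
    exact le _ (N₁.gpos v hv)
  · rintro u v h p ⟨q, hq, rfl⟩
    exact le _ (N₁.garc u v h q hq)
  · intro p h h'
    rcases segs (le_antisymm h h') with hp | hp | hp
    · exact ⟨x, y, hA1, hB1, e1 ▸ hp⟩
    · exact ⟨x, z, hA2, hB2, e2 ▸ hp⟩
    · exact ⟨y, z, hA3, hB3, e3 ▸ hp⟩

end

section
variable {V : Type u}

def liftG (S : Set V) (H : SimpleGraph ↥S) : SimpleGraph V where
  Adj a b := ∃ (ha : a ∈ S) (hb : b ∈ S), H.Adj ⟨a, ha⟩ ⟨b, hb⟩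
  symm := ⟨fun _ _ ⟨ha, hb, h⟩ => ⟨hb, ha, h.symm⟩⟩
  loopless := ⟨fun _ ⟨_, _, h⟩ => h.ne rfl⟩

noncomputable def toC : (ℝ × ℝ) ≃L[ℝ] ℂ := Complex.equivRealProdCLM.symm

lemma liftG_drw (S : Set V) (H : SimpleGraph ↥S) (E : PlaneEmbedding H) :
    Nonempty (Drw (liftG S H) S) := by
  classical
  set pos : V → ℂ := fun a => if h : a ∈ S then toC (E.pos ⟨a, h⟩) else 0 with hpos
  set arc : V → V → Set ℂ := fun a b =>
    {p | ∃ (ha : a ∈ S) (hb : b ∈ S) (h : H.Adj ⟨a, ha⟩ ⟨b, hb⟩), p ∈ toC '' E.arc h} with harc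
  have p1 : ∀ a (h : a ∈ S), pos a = toC (E.pos ⟨a, h⟩) := fun a h => by simp [hpos, h]
  have a1 : ∀ a b (ha : a ∈ S) (hb : b ∈ S) (h : H.Adj ⟨a, ha⟩ ⟨b, hb⟩), arc a b = toC '' E.arc h := by
    intro a b ha hb h
    ext p
    constructor
    · rintro ⟨_, _, _, h⟩; exact h
    · exact fun hp => ⟨ha, hb, h, hp⟩
  refine ⟨⟨pos, arc, fun h => h.1, ?_, ?_, ?_, ?_, ?_⟩⟩
  · intro a ha b hb hab
    rw [p1 a ha, p1 b hb] at hab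
    exact congrArg Subtype.val (E.pos_inj (toC.injective hab))
  · intro a b
    ext p
    constructor
    · rintro ⟨ha, hb, h, hp⟩; exact ⟨hb, ha, h.symm, by rw [E.arc_symm]; exact hp⟩
    · rintro ⟨ha, hb, h, hp⟩; exact ⟨hb, ha, h.symm, by rw [E.arc_symm]; exact hp⟩
  · rintro a b ⟨ha, hb, h⟩
    rw [a1 a b ha hb h, p1 a ha, p1 b hb]
    obtain ⟨f, hc, hi, h0, h1, hS⟩ := E.arc_curve h
    refine ⟨fun t => toC (f t), toC.continuous.comp_continuousOn hc, ?_, by simp [h0], by simp [h1], ?_⟩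
    · intro s hs t ht hst
      exact hi hs ht (toC.injective hst)
    · rw [← hS, image_image]
  · rintro a b c d p ⟨ha, hb, h⟩ ⟨hc, hd, h'⟩ hne hp hp'
    rw [a1 a b ha hb h] at hp
    rw [a1 c d hc hd h'] at hp'
    obtain ⟨q, hq, rfl⟩ := hp
    obtain ⟨q', hq', hqq⟩ := hp'
    have := toC.injective hqq
    subst this
    have hne' : s((⟨a, ha⟩ : S), (⟨b, hb⟩ : S)) ≠ s(⟨c, hc⟩, ⟨d, hd⟩) := by
      intro hh
      exact hne (by simpa using congrArg (Sym2.map Subtype.val) hh)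
    have hm := (E.arc_inter h h' hne' ⟨hq, hq'⟩).1
    rcases hm with hm | hm
    · exact ⟨a, ha, by rw [p1 a ha, hm]⟩
    · exact ⟨b, hb, by rw [p1 b hb, hm]⟩
  · rintro a b w ⟨ha, hb, h⟩ hw hm
    rw [a1 a b ha hb h, p1 w hw] at hm
    obtain ⟨q, hq, hqq⟩ := hm
    have := toC.injective hqq
    subst this
    rcases E.pos_arc h _ hq with hh | hh
    · left; exact congrArg Subtype.val hh
    · right; exact congrArg Subtype.val hh

lemma Drw.planar {M : SimpleGraph V} (D : Drw M univ) : M.IsPlanar := by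
  refine ⟨{ pos := fun v => toC.symm (D.pos v)
            pos_inj := ?_
            arc := fun u v _ => toC.symm '' D.arc u v
            arc_symm := ?_
            arc_curve := ?_
            arc_inter := ?_
            pos_arc := ?_ }⟩
  · intro a b h
    exact D.pos_inj (mem_univ _) (mem_univ _) (toC.symm.injective h)
  · intro u v h
    rw [D.arc_symm]
  · intro u v h
    obtain ⟨f, hc, hi, h0, h1, hS⟩ := D.isArc h
    refine ⟨fun t => toC.symm (f t), toC.symm.continuous.comp_continuousOn hc, ?_, by simp [h0], by simp [h1], ?_⟩
    · intro s hs t ht hst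
      exact hi hs ht (toC.symm.injective hst)
    · rw [← hS, image_image]
  · rintro a b c d h h' hne p ⟨⟨q, hq, rfl⟩, q', hq', hqq⟩
    have := toC.symm.injective hqq
    subst this
    obtain ⟨k, -, rfl, h1, h2⟩ := D.inter' h h' hne hq hq'
    constructor
    · rcases h1 with rfl | rfl <;> simp
    · rcases h2 with rfl | rfl <;> simp
  · rintro a b h w ⟨q, hq, hqq⟩
    have := toC.symm.injective hqq
    subst this
    exact D.pos_arc h (mem_univ _) hq

end

section
variable {V : Type u}

lemma walk_of_seq {M : SimpleGraph V} (f : ℕ → V) (m : ℕ) (hadj : ∀ j < m, M.Adj (f j) (f (j+1)))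
    (hinj : InjOn f (Iic m)) :
    ∃ p : M.Walk (f 0) (f m), p.IsPath ∧ ∀ v, v ∈ p.support ↔ ∃ j ≤ m, v = f j := by
  induction m with
  | zero => exact ⟨.nil, by simp, by simp⟩
  | succ m ih =>
    obtain ⟨p, hp, hs⟩ := ih (fun j hj => hadj j (by omega)) (hinj.mono (Iic_subset_Iic.2 (by omega)))
    refine ⟨p.concat (hadj m (by omega)), hp.concat ?_ _, ?_⟩
    · rw [hs]
      rintro ⟨j, hj, h⟩
      have := hinj (mem_Iic.2 le_rfl) (mem_Iic.2 (by omega)) h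
      omega
    · intro v
      rw [SimpleGraph.Walk.support_concat]
      simp only [List.mem_append, hs, List.mem_singleton]
      constructor
      · rintro (⟨j, hj, h⟩ | h)
        · exact ⟨j, by omega, h⟩
        · exact ⟨m + 1, le_rfl, h⟩
      · rintro ⟨j, hj, h⟩
        rcases Nat.lt_or_ge j (m + 1) with h' | h'
        · exact Or.inl ⟨j, by omega, h⟩
        · right; rw [h, show j = m + 1 by omega]

/-- edges of the cyclic order at a vertex -/
lemma cyc_mem {W : Type u} (σ : ZMod (Nat.card W) ≃ W) {k : ZMod (Nat.card W)} {v : W}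
    (h : s(σ k, v) ∈ cycleEdges σ) : v = σ (k + 1) ∨ v = σ (k - 1) := by
  obtain ⟨i, hi⟩ := h
  rcases Sym2.eq_iff.1 hi with ⟨h1, h2⟩ | ⟨h1, h2⟩
  · left; rw [h2, σ.injective h1]
  · right; rw [h2, σ.injective h1]; simp

lemma cyc_adj {W : Type u} (σ : ZMod (Nat.card W) ≃ W) {u v : W} :
    (cyclicSuccGraph σ).Adj u v ↔ u ≠ v ∧ s(u, v) ∈ cycleEdges σ := by
  unfold cyclicSuccGraph
  rw [SimpleGraph.fromRel_adj]
  refine and_congr_right fun _ => ?_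
  constructor
  · rintro (⟨i, h1, h2⟩ | ⟨i, h1, h2⟩)
    · exact ⟨i, by rw [h1, h2]⟩
    · exact ⟨i, by rw [h1, h2, Sym2.eq_swap]⟩
  · rintro ⟨i, hi⟩
    rcases Sym2.eq_iff.1 hi with ⟨h1, h2⟩ | ⟨h1, h2⟩
    · exact Or.inl ⟨i, h1, h2⟩
    · exact Or.inr ⟨i, h2, h1⟩

lemma cyc_path {W : Type u} [Finite W] (σ : ZMod (Nat.card W) ≃ W) (h2 : 2 ≤ Nat.card W)
    (k : ZMod (Nat.card W)) :
    ∃ p : (cyclicSuccGraph σ).Walk (σ (k + 1)) (σ (k - 1)), p.IsPath ∧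
      ∀ v, v ∈ p.support ↔ v ≠ σ k := by
  have : NeZero (Nat.card W) := ⟨by omega⟩
  have : Fact (1 < (Nat.card W)) := ⟨by omega⟩
  set f : ℕ → W := fun j => σ (k + 1 + j) with hf
  have hcast : ∀ a b : ℕ, a < (Nat.card W) → b < (Nat.card W) → (a : ZMod (Nat.card W)) = b → a = b := by
    intro a b ha hb h
    have := congrArg ZMod.val h
    rwa [ZMod.val_natCast_of_lt ha, ZMod.val_natCast_of_lt hb] at this
  obtain ⟨p, hp, hs⟩ := walk_of_seq (M := cyclicSuccGraph σ) f ((Nat.card W) - 2)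
    (by
      intro j hj
      rw [cyc_adj]
      refine ⟨?_, k + 1 + j, ?_⟩
      · intro h
        have := σ.injective h
        push_cast at this
        have h1 : (0 : ZMod (Nat.card W)) = 1 := by linear_combination this
        exact zero_ne_one h1
      · simp only [hf]; push_cast; rw [add_assoc (k + 1)])
    (by
      intro a ha b hb h
      have h1 := σ.injective h
      simp only [mem_Iic] at ha hb
      exact hcast a b (by omega) (by omega) (by linear_combination h1))
  have e0 : f 0 = σ (k + 1) := by simp [hf]
  have e1 : f ((Nat.card W) - 2) = σ (k - 1) := by
    simp only [hf]
    congr 1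
    have : (((Nat.card W) - 2 : ℕ) : ZMod (Nat.card W)) + 2 = ((Nat.card W) : ZMod (Nat.card W)) := by
      exact_mod_cast congrArg (Nat.cast (R := ZMod (Nat.card W))) (show (Nat.card W) - 2 + 2 = (Nat.card W) by omega)
    rw [ZMod.natCast_self] at this
    linear_combination this
  refine ⟨p.copy e0 e1, by simpa using hp, ?_⟩
  intro v
  rw [SimpleGraph.Walk.support_copy, hs]
  constructor
  · rintro ⟨j, hj, rfl⟩ h
    have h1 := σ.injective h
    have h2 : ((j + 1 : ℕ) : ZMod (Nat.card W)) = (0 : ℕ) := by push_cast; linear_combination h1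
    have := hcast _ _ (by omega) (by omega) h2
    omega
  · intro hv
    obtain ⟨t, rfl⟩ := σ.surjective v
    have hval := ZMod.natCast_zmod_val (t - k - 1)
    have hlt := ZMod.val_lt (t - k - 1)
    refine ⟨(t - k - 1).val, ?_, ?_⟩
    · by_contra hh
      have h1 : (t - k - 1).val + 1 = (Nat.card W) := by omega
      have h2 := congrArg (Nat.cast (R := ZMod (Nat.card W))) h1
      push_cast at h2
      rw [hval, ZMod.natCast_self] at h2
      exact hv (congrArg σ (by linear_combination h2))
    · simp only [hf]
      rw [hval]
      congr 1; ring

/-- path between the two cycle neighbours of `x`, avoiding `x` -/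
lemma cyc_path' [Finite V] {S : Set V} {M : SimpleGraph V} (σ : ZMod (Nat.card S) ≃ S) {x y z : V}
    (hx : x ∈ S) (hy : y ∈ S) (hz : z ∈ S) (hyz : y ≠ z)
    (h1 : s((⟨x, hx⟩ : S), (⟨y, hy⟩ : S)) ∈ cycleEdges σ)
    (h2 : s((⟨x, hx⟩ : S), (⟨z, hz⟩ : S)) ∈ cycleEdges σ)
    (hM : ∀ u v : S, (cyclicSuccGraph σ).Adj u v → M.Adj u v) :
    ∃ p : M.Walk y z, p.IsPath ∧ ∀ v, v ∈ p.support ↔ v ∈ S ∧ v ≠ x := by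
  obtain ⟨k, hk⟩ := σ.surjective ⟨x, hx⟩
  have hcard : 2 ≤ Nat.card S := by
    have : Nontrivial S := ⟨⟨y, hy⟩, ⟨z, hz⟩, fun h => hyz (congrArg Subtype.val h)⟩
    exact Finite.one_lt_card
  obtain ⟨p, hp, hs⟩ := cyc_path σ hcard k
  let φ : cyclicSuccGraph σ →g M := ⟨Subtype.val, fun {u v} h => hM u v h⟩
  have hq : (p.map φ).IsPath := hp.map Subtype.val_injective
  have hsq : ∀ v, v ∈ (p.map φ).support ↔ v ∈ S ∧ v ≠ x := by
    intro v
    rw [SimpleGraph.Walk.support_map, List.mem_map]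
    constructor
    · rintro ⟨w, hw, rfl⟩
      refine ⟨w.2, fun h => (hs w).1 hw ?_⟩
      rw [hk]; exact Subtype.ext h
    · rintro ⟨hv, hvx⟩
      refine ⟨⟨v, hv⟩, (hs _).2 ?_, rfl⟩
      rw [hk]; exact fun h => hvx (congrArg Subtype.val h)
  rw [← hk] at h1 h2
  have hne : (⟨y, hy⟩ : S) ≠ ⟨z, hz⟩ := fun h => hyz (congrArg Subtype.val h)
  rcases cyc_mem σ h1 with a | a <;> rcases cyc_mem σ h2 with b | b
  · exact absurd (a.trans b.symm) hne
  · refine ⟨(p.map φ).copy (congrArg Subtype.val a.symm) (congrArg Subtype.val b.symm), ?_, ?_⟩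
    · simpa using hq
    · simpa using hsq
  · refine ⟨((p.map φ).copy (congrArg Subtype.val b.symm) (congrArg Subtype.val a.symm)).reverse, ?_, ?_⟩
    · rw [SimpleGraph.Walk.isPath_reverse_iff]; simpa using hq
    · simpa using hsq
  · exact absurd (a.trans b.symm) hne

lemma ham_of_paths [Fintype V] [DecidableEq V] {M : SimpleGraph V} {x y z : V} (hxy : M.Adj x y) {S₁ S₂ : Set V}
    (hU : ∀ v, v ∈ S₁ ∨ v ∈ S₂) (hI : ∀ v, v ∈ S₁ → v ∈ S₂ → v = x ∨ v = y ∨ v = z)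
    (p : M.Walk y z) (hp : p.IsPath) (hps : ∀ v, v ∈ p.support ↔ v ∈ S₁ ∧ v ≠ x)
    (q : M.Walk z x) (hq : q.IsPath) (hqs : ∀ v, v ∈ q.support ↔ v ∈ S₂ ∧ v ≠ y) :
    M.IsHamiltonian := by
  have hr : (p.append q).IsPath := by
    rw [SimpleGraph.Walk.isPath_def, SimpleGraph.Walk.support_append, List.nodup_append]
    refine ⟨hp.support_nodup, hq.support_nodup.tail, ?_⟩
    rintro a ha b hb rfl
    have hb' := List.mem_of_mem_tail hb
    have h1 := (hps a).1 ha
    have h2 := (hqs a).1 hb'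
    have haz : a = z := by
      rcases hI a h1.1 h2.1 with h | h | h
      · exact absurd h h1.2
      · exact absurd h h2.2
      · exact h
    subst haz
    have := hq.support_nodup
    rw [← q.cons_tail_support, List.nodup_cons] at this
    exact this.1 hb
  have hedge : s(x, y) ∉ (p.append q).edges := by
    rw [SimpleGraph.Walk.edges_append, List.mem_append]
    rintro (h | h)
    · exact ((hps x).1 (p.fst_mem_support_of_mem_edges h)).2 rfl
    · exact ((hqs y).1 (q.snd_mem_support_of_mem_edges h)).2 rfl
  intro _
  refine ⟨x, .cons hxy (p.append q), ⟨(SimpleGraph.Walk.cons_isCycle_iff _ _).2 ⟨hr, hedge⟩, ?_⟩⟩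
  have key : (p.append q).IsHamiltonian := by
    refine hr.isHamiltonian_of_mem fun v => ?_
    rw [SimpleGraph.Walk.mem_support_append_iff]
    by_cases hvx : v = x
    · right; subst hvx; exact q.end_mem_support
    by_cases hvy : v = y
    · left; subst hvy; exact p.start_mem_support
    rcases hU v with h | h
    · exact Or.inl ((hps v).2 ⟨h, hvx⟩)
    · exact Or.inr ((hqs v).2 ⟨h, hvy⟩)
  simpa [SimpleGraph.Walk.IsHamiltonian] using key

lemma merge_abs [Fintype V] (G : SimpleGraph V) {x y z : V} {S₁ S₂ : Set V}
    (hU : ∀ v, v ∈ S₁ ∨ v ∈ S₂) (hI : ∀ v, v ∈ S₁ → v ∈ S₂ → v = x ∨ v = y ∨ v = z)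
    (hx₁ : x ∈ S₁) (hy₁ : y ∈ S₁) (hz₁ : z ∈ S₁) (hx₂ : x ∈ S₂) (hy₂ : y ∈ S₂) (hz₂ : z ∈ S₂)
    (hxy : G.Adj x y) (hxz : G.Adj x z) (hyz : G.Adj y z)
    (hG : ∀ a b, G.Adj a b → (a ∈ S₁ ∧ b ∈ S₁) ∨ (a ∈ S₂ ∧ b ∈ S₂))
    (σ₁ : ZMod (Nat.card S₁) ≃ S₁) (σ₂ : ZMod (Nat.card S₂) ≃ S₂)
    (hσ₁ : (G.induce S₁).IsSubhamiltonianCycle σ₁) (hσ₂ : (G.induce S₂).IsSubhamiltonianCycle σ₂)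
    (c₁ : s((⟨x, hx₁⟩ : S₁), (⟨y, hy₁⟩ : S₁)) ∈ cycleEdges σ₁)
    (c₂ : s((⟨x, hx₁⟩ : S₁), (⟨z, hz₁⟩ : S₁)) ∈ cycleEdges σ₁)
    (c₃ : s((⟨y, hy₂⟩ : S₂), (⟨x, hx₂⟩ : S₂)) ∈ cycleEdges σ₂)
    (c₄ : s((⟨y, hy₂⟩ : S₂), (⟨z, hz₂⟩ : S₂)) ∈ cycleEdges σ₂)
    {i j : V} (hi : ∀ w ∈ S₁, G.Adj x w ↔ w = y ∨ w = z ∨ w = i) (hiS : i ∈ S₁) (hyi : y ≠ i) (hzi : z ≠ i)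
    (hj : ∀ w ∈ S₂, G.Adj y w ↔ w = x ∨ w = z ∨ w = j) (hjS : j ∈ S₂) (hxj : x ≠ j) (hzj : z ≠ j) :
    G.IsSubhamiltonian := by
  classical
  set A := liftG S₁ (G.induce S₁ ⊔ cyclicSuccGraph σ₁) with hA
  set B := liftG S₂ (G.induce S₂ ⊔ cyclicSuccGraph σ₂) with hB
  have nb : ∀ {S : Set V} (σ : ZMod (Nat.card S) ≃ S) {x y z i : V} (hx : x ∈ S) (hy : y ∈ S) (hz : z ∈ S)
      (hiS : i ∈ S) (hyz : y ≠ z)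
      (c₁ : s((⟨x, hx⟩ : S), (⟨y, hy⟩ : S)) ∈ cycleEdges σ) (c₂ : s((⟨x, hx⟩ : S), (⟨z, hz⟩ : S)) ∈ cycleEdges σ)
      (hi : ∀ w ∈ S, G.Adj x w ↔ w = y ∨ w = z ∨ w = i),
      ∀ w, (liftG S (G.induce S ⊔ cyclicSuccGraph σ)).Adj x w ↔ w = y ∨ w = z ∨ w = i := by
    intro S σ x y z i hx hy hz hiS hyz c₁ c₂ hi w
    constructor
    · rintro ⟨_, hw, h | h⟩
      · exact (hi w hw).1 h
      · rw [cyc_adj] at h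
        obtain ⟨k, hk⟩ := σ.surjective ⟨x, hx⟩
        have h3 := h.2
        rw [← hk] at c₁ c₂ h3
        have hne : (⟨y, hy⟩ : S) ≠ ⟨z, hz⟩ := fun h => hyz (congrArg Subtype.val h)
        rcases cyc_mem σ c₁ with a | a <;> rcases cyc_mem σ c₂ with b | b
        · exact absurd (a.trans b.symm) hne
        · rcases cyc_mem σ h3 with d | d
          · left; exact congrArg Subtype.val (d.trans a.symm)
          · right; left; exact congrArg Subtype.val (d.trans b.symm)
        · rcases cyc_mem σ h3 with d | d
          · right; left; exact congrArg Subtype.val (d.trans b.symm)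
          · left; exact congrArg Subtype.val (d.trans a.symm)
        · exact absurd (a.trans b.symm) hne
    · intro h
      have hw : w ∈ S := by rcases h with rfl | rfl | rfl <;> assumption
      exact ⟨hx, hw, Or.inl ((hi w hw).2 h)⟩
  have GA : ∀ a b, a ∈ S₁ → b ∈ S₁ → G.Adj a b → A.Adj a b := fun a b ha hb h => ⟨ha, hb, Or.inl h⟩
  have GB : ∀ a b, a ∈ S₂ → b ∈ S₂ → G.Adj a b → B.Adj a b := fun a b ha hb h => ⟨ha, hb, Or.inl h⟩
  obtain ⟨EA⟩ := hσ₁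
  obtain ⟨EB⟩ := hσ₂
  obtain ⟨DA⟩ := liftG_drw _ _ EA
  obtain ⟨DB⟩ := liftG_drw _ _ EB
  obtain ⟨NA, hNA⟩ := normal DA (nb σ₁ hx₁ hy₁ hz₁ hiS hyz.ne c₁ c₂ hi) (GA y z hy₁ hz₁ hyz) hyi hzi
  obtain ⟨NB, hNB⟩ := normal' DB (nb σ₂ hy₂ hx₂ hz₂ hjS hxz.ne c₃ c₄ hj) (GB x z hx₂ hz₂ hxz) hxj hzj
  obtain ⟨DM⟩ := glue_norml NA NB hNA hNB hU hI (GA x y hx₁ hy₁ hxy) (GA x z hx₁ hz₁ hxz)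
    (GA y z hy₁ hz₁ hyz) (GB x y hx₂ hy₂ hxy) (GB x z hx₂ hz₂ hxz) (GB y z hy₂ hz₂ hyz)
  obtain ⟨p, hp, hps⟩ := cyc_path' (M := A ⊔ B) σ₁ hx₁ hy₁ hz₁ hyz.ne c₁ c₂
    (fun u v h => Or.inl ⟨u.2, v.2, Or.inr h⟩)
  obtain ⟨q, hq, hqs⟩ := cyc_path' (M := A ⊔ B) σ₂ hy₂ hx₂ hz₂ hxz.ne c₃ c₄
    (fun u v h => Or.inr ⟨u.2, v.2, Or.inr h⟩)
  refine ⟨A ⊔ B, ?_, DM.planar, ?_⟩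
  · intro a b h
    rcases hG a b h with h' | h'
    · exact Or.inl (GA a b h'.1 h'.2 h)
    · exact Or.inr (GB a b h'.1 h'.2 h)
  · have := ham_of_paths (M := A ⊔ B) (Or.inl (GA x y hx₁ hy₁ hxy)) hU hI p hp hps q.reverse
      (by simpa using hq) (by simpa using hqs)
    convert this

end

section
variable {V : Type u}

lemma exists_cross {H : SimpleGraph V} (hH : H.Connected) (P : Set V) {u v : V} (hu : u ∈ P) (hv : v ∉ P) :
    ∃ a b, H.Adj a b ∧ a ∈ P ∧ b ∉ P := by
  obtain ⟨w⟩ := hH.preconnected u v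
  obtain ⟨d, -, h1, h2⟩ := w.exists_boundary_dart P hu hv
  exact ⟨d.fst, d.snd, d.adj, h1, h2⟩

lemma has_nbr {G : SimpleGraph V} (h3 : G.IsTriconnected) {x y z : V} {P : Set V}
    (hxy : x ≠ y) (hxz : x ≠ z)
    (hP : P.Nonempty) (hPx : x ∉ P) (hPy : y ∉ P) (hPz : z ∉ P)
    (hcl : ∀ a b, G.Adj a b → a ∈ P → b ∈ P ∨ b = x ∨ b = y ∨ b = z) : ∃ i ∈ P, G.Adj x i := by
  obtain ⟨p, hp⟩ := hP
  have hpy : p ≠ y := by rintro rfl; exact hPy hp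
  have hpz : p ≠ z := by rintro rfl; exact hPz hp
  obtain ⟨a, b, hab, ha, hb⟩ := exists_cross (h3.2.2 y z) {v | v.1 ∈ P}
    (u := ⟨p, hpy, hpz⟩) (v := ⟨x, hxy, hxz⟩) hp hPx
  have hab' : G.Adj a.1 b.1 := hab
  rcases hcl a b hab' ha with h | h | h | h
  · exact absurd h hb
  · exact ⟨a, ha, by rw [← h]; exact hab'.symm⟩
  · exact absurd h b.2.1
  · exact absurd h b.2.2

lemma uniq_nbr [Fintype V] {G : SimpleGraph V} (h3 : G.IsTriconnected) (hdeg : G.MaxDegreeLE 4) {x y z : V}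
    {P Q : Set V} (hxy : G.Adj x y) (hxz : G.Adj x z) (hyz : y ≠ z)
    (hP : P.Nonempty) (hPx : x ∉ P) (hPy : y ∉ P) (hPz : z ∉ P)
    (hQ : Q.Nonempty) (hQx : x ∉ Q) (hQy : y ∉ Q) (hQz : z ∉ Q) (hPQ : ∀ v, v ∈ P → v ∉ Q)
    (hcl : ∀ a b, G.Adj a b → a ∈ P → b ∈ P ∨ b = x ∨ b = y ∨ b = z)
    (hcl' : ∀ a b, G.Adj a b → a ∈ Q → b ∈ Q ∨ b = x ∨ b = y ∨ b = z) :
    ∃ i ∈ P, ∀ w, w ∉ Q → (G.Adj x w ↔ w = y ∨ w = z ∨ w = i) := by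
  classical
  obtain ⟨i, hi, hxi⟩ := has_nbr h3 hxy.ne hxz.ne hP hPx hPy hPz hcl
  obtain ⟨o, ho, hxo⟩ := has_nbr h3 hxy.ne hxz.ne hQ hQx hQy hQz hcl'
  have hyi : y ≠ i := by rintro rfl; exact hPy hi
  have hzi : z ≠ i := by rintro rfl; exact hPz hi
  have hyo : y ≠ o := by rintro rfl; exact hQy ho
  have hzo : z ≠ o := by rintro rfl; exact hQz ho
  have hio : i ≠ o := by rintro rfl; exact hPQ _ hi ho
  have hsub : (({y, z, i, o} : Finset V) : Set V) ⊆ G.neighborSet x := by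
    intro w hw
    simp only [Finset.coe_insert, Finset.coe_singleton, mem_insert_iff, mem_singleton_iff] at hw
    rcases hw with rfl | rfl | rfl | rfl <;> assumption
  have hcard : (({y, z, i, o} : Finset V) : Set V).ncard = 4 := by
    rw [Set.ncard_coe_finset]
    simp [hyz, hyi, hyo, hzi, hzo, hio]
  have heq := Set.eq_of_subset_of_ncard_le hsub (by rw [hcard]; exact hdeg x) (Set.toFinite _)
  refine ⟨i, hi, fun w hw => ?_⟩
  constructor
  · intro h
    have : w ∈ G.neighborSet x := h
    rw [← heq] at this
    simp only [Finset.coe_insert, Finset.coe_singleton, mem_insert_iff, mem_singleton_iff] at this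
    rcases this with h | h | h | h
    · exact Or.inl h
    · exact Or.inr (Or.inl h)
    · exact Or.inr (Or.inr h)
    · rw [h] at hw; exact absurd ho hw
  · rintro (rfl | rfl | rfl) <;> assumption

lemma zmod3 (n : ℕ) (hn : n = 3) (i j : ZMod n) (h : i ≠ j) : j = i + 1 ∨ i = j + 1 := by
  subst hn
  revert i j
  decide

lemma small_cycle {S : Set V} (σ : ZMod (Nat.card S) ≃ S) (h : Nat.card S = 3) {u v : V} (hu : u ∈ S) (hv : v ∈ S)
    (huv : u ≠ v) : s(u, v) ∈ Sym2.map Subtype.val '' cycleEdges σ := by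
  obtain ⟨i, hi⟩ := σ.surjective ⟨u, hu⟩
  obtain ⟨j, hj⟩ := σ.surjective ⟨v, hv⟩
  have hij : i ≠ j := by
    rintro rfl
    rw [hi] at hj
    exact huv (congrArg Subtype.val hj)
  refine ⟨s(⟨u, hu⟩, ⟨v, hv⟩), ?_, by simp⟩
  rcases zmod3 _ h i j hij with rfl | rfl
  · exact ⟨i, by rw [hi, hj]⟩
  · exact ⟨j, by rw [hi, hj, Sym2.eq_swap]⟩

lemma mem_cyc {S : Set V} (σ : ZMod (Nat.card S) ≃ S) {u v : V} (hu : u ∈ S) (hv : v ∈ S)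
    (h : s(u, v) ∈ Sym2.map Subtype.val '' cycleEdges σ) :
    s((⟨u, hu⟩ : S), (⟨v, hv⟩ : S)) ∈ cycleEdges σ := by
  obtain ⟨f, hf, hfe⟩ := h
  have : f = s((⟨u, hu⟩ : S), (⟨v, hv⟩ : S)) := by
    apply Sym2.map.injective Subtype.val_injective
    rw [hfe]; simp
  rwa [← this]

lemma card_triple {x y z : V} (hxy : x ≠ y) (hxz : x ≠ z) (hyz : y ≠ z) {S : Set V}
    (hS : ∀ v, v ∈ S ↔ v = x ∨ v = y ∨ v = z) : Nat.card S = 3 := by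
  have : S = {x, y, z} := by ext v; simp [hS]
  rw [this, Nat.card_coe_set_eq]
  exact Set.ncard_eq_three.2 ⟨x, y, z, hxy, hxz, hyz, rfl⟩

lemma merge_xyz [Fintype V] (G : SimpleGraph V) (h3 : G.IsTriconnected) (hdeg : G.MaxDegreeLE 4)
    {I O T S₁ S₂ : Set V} {x y z : V} (hxy : G.Adj x y) (hxz : G.Adj x z) (hyz : G.Adj y z)
    (hT : ∀ v, v ∈ T ↔ v = x ∨ v = y ∨ v = z) (hS₁ : S₁ = I ∪ T) (hS₂ : S₂ = O ∪ T)
    (hIT : ∀ v ∈ I, v ∉ T) (hOT : ∀ v ∈ O, v ∉ T) (hdisj : ∀ v ∈ I, v ∉ O)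
    (hU : ∀ v, v ∉ T → v ∈ I ∨ v ∈ O)
    (hno : ∀ u v, G.Adj u v → u ∈ I → v ∉ O)
    (σ₁ : ZMod (Nat.card S₁) ≃ S₁) (σ₂ : ZMod (Nat.card S₂) ≃ S₂)
    (hσ₁ : (G.induce S₁).IsSubhamiltonianCycle σ₁) (hσ₂ : (G.induce S₂).IsSubhamiltonianCycle σ₂)
    (c₁ : s(x, y) ∈ Sym2.map Subtype.val '' cycleEdges σ₁)
    (c₂ : s(x, z) ∈ Sym2.map Subtype.val '' cycleEdges σ₁)
    (c₃ : s(y, z) ∉ Sym2.map Subtype.val '' cycleEdges σ₁)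
    (d₁ : s(x, y) ∈ Sym2.map Subtype.val '' cycleEdges σ₂)
    (d₂ : s(y, z) ∈ Sym2.map Subtype.val '' cycleEdges σ₂)
    (d₃ : s(x, z) ∉ Sym2.map Subtype.val '' cycleEdges σ₂) : G.IsSubhamiltonian := by
  have hxT : x ∈ T := (hT x).2 (by simp)
  have hyT : y ∈ T := (hT y).2 (by simp)
  have hzT : z ∈ T := (hT z).2 (by simp)
  have T1 : ∀ v ∈ T, v ∈ S₁ := fun v h => by rw [hS₁]; exact Or.inr h
  have T2 : ∀ v ∈ T, v ∈ S₂ := fun v h => by rw [hS₂]; exact Or.inr h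
  have hIne : I.Nonempty := by
    by_contra hne
    rw [not_nonempty_iff_eq_empty] at hne
    refine c₃ (small_cycle σ₁ (card_triple hxy.ne hxz.ne hyz.ne ?_) (T1 y hyT) (T1 z hzT) hyz.ne)
    intro v; rw [hS₁, hne, empty_union, hT]
  have hOne : O.Nonempty := by
    by_contra hne
    rw [not_nonempty_iff_eq_empty] at hne
    refine d₃ (small_cycle σ₂ (card_triple hxy.ne hxz.ne hyz.ne ?_) (T2 x hxT) (T2 z hzT) hxz.ne)
    intro v; rw [hS₂, hne, empty_union, hT]
  have clI : ∀ a b, G.Adj a b → a ∈ I → b ∈ I ∨ b = x ∨ b = y ∨ b = z := by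
    intro a b h ha
    by_cases hb : b ∈ T
    · right; exact (hT b).1 hb
    · rcases hU b hb with h' | h'
      · exact Or.inl h'
      · exact absurd h' (hno a b h ha)
  have clO : ∀ a b, G.Adj a b → a ∈ O → b ∈ O ∨ b = x ∨ b = y ∨ b = z := by
    intro a b h ha
    by_cases hb : b ∈ T
    · right; exact (hT b).1 hb
    · rcases hU b hb with h' | h'
      · exact absurd ha (hno b a h.symm h')
      · exact Or.inl h'
  have nI : ∀ v ∈ T, v ∉ I := fun v hv h => hIT v h hv
  have nO : ∀ v ∈ T, v ∉ O := fun v hv h => hOT v h hv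
  obtain ⟨i, hi, hin⟩ := uniq_nbr h3 hdeg hxy hxz hyz.ne hIne (nI x hxT) (nI y hyT) (nI z hzT)
    hOne (nO x hxT) (nO y hyT) (nO z hzT) hdisj clI clO
  obtain ⟨j, hj, hjn⟩ := uniq_nbr (x := y) (y := x) (z := z) h3 hdeg hxy.symm hyz hxz.ne hOne (nO y hyT)
    (nO x hxT) (nO z hzT) hIne (nI y hyT) (nI x hxT) (nI z hzT) (fun v h h' => hdisj v h' h)
    (fun a b h h' => by have := clO a b h h'; tauto) (fun a b h h' => by have := clI a b h h'; tauto)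
  have S1O : ∀ v ∈ S₁, v ∉ O := by
    intro v hv
    rw [hS₁] at hv
    rcases hv with h | h
    · exact hdisj v h
    · exact nO v h
  have S2I : ∀ v ∈ S₂, v ∉ I := by
    intro v hv
    rw [hS₂] at hv
    rcases hv with h | h
    · exact fun h' => hdisj v h' h
    · exact nI v h
  have i1 : ∀ v ∈ I, v ∈ S₁ := fun v hv => by rw [hS₁]; exact Or.inl hv
  have o2 : ∀ v ∈ O, v ∈ S₂ := fun v hv => by rw [hS₂]; exact Or.inl hv
  refine merge_abs G (x := x) (y := y) (z := z) (S₁ := S₁) (S₂ := S₂) ?_ ?_ (T1 x hxT) (T1 y hyT) (T1 z hzT)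
    (T2 x hxT) (T2 y hyT) (T2 z hzT) hxy hxz hyz ?_ σ₁ σ₂ hσ₁ hσ₂ (mem_cyc σ₁ _ _ c₁) (mem_cyc σ₁ _ _ c₂)
    (mem_cyc σ₂ _ _ (by rw [Sym2.eq_swap]; exact d₁)) (mem_cyc σ₂ _ _ d₂) (fun w hw => hin w (S1O w hw)) (i1 i hi) ?_ ?_
    (fun w hw => hjn w (S2I w hw)) (o2 j hj) ?_ ?_
  · intro v
    by_cases hv : v ∈ T
    · exact Or.inl (T1 v hv)
    · exact (hU v hv).imp (i1 v) (o2 v)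
  · intro v h1 h2
    rw [← hT]
    by_contra hv
    rcases hU v hv with h | h
    · exact S2I v h2 h
    · exact S1O v h1 h
  · intro a b h
    by_cases ha : a ∈ T
    · by_cases hb : b ∈ T
      · exact Or.inl ⟨T1 a ha, T1 b hb⟩
      · exact (hU b hb).imp (fun h => ⟨T1 a ha, i1 b h⟩) (fun h => ⟨T2 a ha, o2 b h⟩)
    · rcases hU a ha with h' | h'
      · left; refine ⟨i1 a h', ?_⟩
        rcases clI a b h h' with hb | hb
        · exact i1 b hb
        · exact T1 b ((hT b).2 hb)
      · right; refine ⟨o2 a h', ?_⟩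
        rcases clO a b h h' with hb | hb
        · exact o2 b hb
        · exact T2 b ((hT b).2 hb)
  · rintro rfl; exact nI _ hyT hi
  · rintro rfl; exact nI _ hzT hi
  · rintro rfl; exact nO _ hxT hj
  · rintro rfl; exact nO _ hzT hj

lemma same_comp {G : SimpleGraph V} (E : PlaneEmbedding G) {a b c u v : V} (hab : G.Adj a b) (hbc : G.Adj b c)
    (hac : G.Adj a c) (huv : G.Adj u v) (hu : u ≠ a ∧ u ≠ b ∧ u ≠ c) (hv : v ≠ a ∧ v ≠ b ∧ v ≠ c) :
    connectedComponentIn (triangleDrawing E hab hbc hac)ᶜ (E.pos u) =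
      connectedComponentIn (triangleDrawing E hab hbc hac)ᶜ (E.pos v) := by
  obtain ⟨f, hc, hi, h0, h1, hS⟩ := E.arc_curve huv
  have hpre : IsPreconnected (E.arc huv) := by
    rw [← hS]; exact isPreconnected_Icc.image f hc
  have hum : E.pos u ∈ E.arc huv := by rw [← hS, ← h0]; exact ⟨0, by simp, rfl⟩
  have hvm : E.pos v ∈ E.arc huv := by rw [← hS, ← h1]; exact ⟨1, by simp, rfl⟩
  have aux : ∀ {s t : V} (hst : G.Adj s t), u ≠ s → u ≠ t → v ≠ s → v ≠ t → ∀ p ∈ E.arc huv, p ∉ E.arc hst := by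
    intro s t hst h1 h2 h3 h4 p hp hp'
    have hne : s(u, v) ≠ s(s, t) := by
      intro hh
      rcases Sym2.eq_iff.1 hh with h | h
      · exact h1 h.1
      · exact h2 h.1
    have := E.arc_inter huv hst hne ⟨hp, hp'⟩
    rcases this with ⟨hA | hA, hB | hB⟩
    · exact h1 (E.pos_inj (hA.symm.trans hB))
    · exact h2 (E.pos_inj (hA.symm.trans hB))
    · exact h3 (E.pos_inj (hA.symm.trans hB))
    · exact h4 (E.pos_inj (hA.symm.trans hB))
  have hsub : E.arc huv ⊆ (triangleDrawing E hab hbc hac)ᶜ := by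
    rintro p hp ((h | h) | h)
    · exact aux hab hu.1 hu.2.1 hv.1 hv.2.1 p hp h
    · exact aux hbc hu.2.1 hu.2.2 hv.2.1 hv.2.2 p hp h
    · exact aux hac hu.1 hu.2.2 hv.1 hv.2.2 p hp h
  exact connectedComponentIn_eq (hpre.subset_connectedComponentIn hum hsub hvm)

end

/-- Let `T` be a separating triangle of a triconnected 4-planar graph
`G` with edge set `{e, ein, eout}`, and let `σin`, `σout` be subhamiltonian cycles of the
closed inside and outside subgraphs respectively. If `σin` uses exactly the edges
`{ein, e}` of `T` and `σout` uses exactly the edges `{eout, e}` of `T`, then `G` is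
subhamiltonian. -/
theorem merge_subhamiltonian_cycles_at_sep_triangle {V : Type u} [Fintype V]
    (G : SimpleGraph V) (h3 : G.IsTriconnected) (hplanar : G.IsPlanar)
    (hdeg : G.MaxDegreeLE 4) (E : PlaneEmbedding G)
    {a b c : V} (hT : G.IsSepTriangle a b c)
    (e ein eout : Sym2 V)
    (hedges : ({e, ein, eout} : Set (Sym2 V)) = {s(a, b), s(b, c), s(a, c)})
    (h1 : e ≠ ein) (h2 : e ≠ eout) (h3' : ein ≠ eout)
    (σin : ZMod (Nat.card ↥(closedInsideTriangle E hT.1 hT.2.1 hT.2.2.1)) ≃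
      ↥(closedInsideTriangle E hT.1 hT.2.1 hT.2.2.1))
    (σout : ZMod (Nat.card ↥(closedOutsideTriangle E hT.1 hT.2.1 hT.2.2.1)) ≃
      ↥(closedOutsideTriangle E hT.1 hT.2.1 hT.2.2.1))
    (hσin : (G.induce (closedInsideTriangle E hT.1 hT.2.1 hT.2.2.1)).IsSubhamiltonianCycle σin)
    (hσout : (G.induce (closedOutsideTriangle E hT.1 hT.2.1 hT.2.2.1)).IsSubhamiltonianCycle σout)
    (husedin : Sym2.map (Subtype.val) '' cycleEdges σin ∩
      ({s(a, b), s(b, c), s(a, c)} : Set (Sym2 V)) = {ein, e})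
    (husedout : Sym2.map (Subtype.val) '' cycleEdges σout ∩
      ({s(a, b), s(b, c), s(a, c)} : Set (Sym2 V)) = {eout, e}) :
    G.IsSubhamiltonian := by
  obtain ⟨hab, hbc, hac, hsep⟩ := hT
  have hRin : ∀ f, f ∈ ({s(a, b), s(b, c), s(a, c)} : Set (Sym2 V)) →
      (f ∈ Sym2.map (Subtype.val) '' cycleEdges σin ↔ f = ein ∨ f = e) := by
    intro f hf
    have := Set.ext_iff.1 husedin f
    rw [Set.mem_inter_iff] at this
    simp only [hf, and_true] at this
    exact this
  have hRout : ∀ f, f ∈ ({s(a, b), s(b, c), s(a, c)} : Set (Sym2 V)) →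
      (f ∈ Sym2.map (Subtype.val) '' cycleEdges σout ↔ f = eout ∨ f = e) := by
    intro f hf
    have := Set.ext_iff.1 husedout f
    rw [Set.mem_inter_iff] at this
    simp only [hf, and_true] at this
    exact this
  have m1 : e ∈ ({s(a, b), s(b, c), s(a, c)} : Set (Sym2 V)) := by rw [← hedges]; simp
  have m2 : ein ∈ ({s(a, b), s(b, c), s(a, c)} : Set (Sym2 V)) := by rw [← hedges]; simp
  have m3 : eout ∈ ({s(a, b), s(b, c), s(a, c)} : Set (Sym2 V)) := by rw [← hedges]; simp
  have key : ∀ x y z : V, G.Adj x y → G.Adj x z → G.Adj y z →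
      (∀ v, v ∈ ({a, b, c} : Set V) ↔ v = x ∨ v = y ∨ v = z) →
      e = s(x, y) → ein = s(x, z) → eout = s(y, z) → G.IsSubhamiltonian := by
    intro x y z hxy hxz hyz hT he hi ho
    refine merge_xyz G h3 hdeg (I := insideTriangle E hab hbc hac) (O := outsideTriangle E hab hbc hac)
      (T := {a, b, c})
      (S₁ := closedInsideTriangle E hab hbc hac) (S₂ := closedOutsideTriangle E hab hbc hac) hxy hxz hyz hT rfl rfl ?_ ?_ ?_ ?_ ?_ σin σout hσin hσout
      ?_ ?_ ?_ ?_ ?_ ?_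
    · rintro v ⟨h1, h2, h3, -⟩ (h | h | h)
      · exact h1 h
      · exact h2 h
      · exact h3 h
    · rintro v ⟨h1, h2, h3, -⟩ (h | h | h)
      · exact h1 h
      · exact h2 h
      · exact h3 h
    · rintro v ⟨-, -, -, h⟩ ⟨-, -, -, h'⟩
      exact h' h
    · intro v hv
      simp only [Set.mem_insert_iff, Set.mem_singleton_iff, not_or] at hv
      by_cases hb : Bornology.IsBounded
          (connectedComponentIn (triangleDrawing E hab hbc hac)ᶜ (E.pos v))
      · exact Or.inl ⟨hv.1, hv.2.1, hv.2.2, hb⟩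
      · exact Or.inr ⟨hv.1, hv.2.1, hv.2.2, hb⟩
    · rintro u v huv ⟨u1, u2, u3, hu⟩ ⟨v1, v2, v3, hv⟩
      rw [← same_comp E hab hbc hac huv ⟨u1, u2, u3⟩ ⟨v1, v2, v3⟩] at hv
      exact hv hu
    · rw [← he]; exact (hRin e m1).2 (Or.inr rfl)
    · rw [← hi]; exact (hRin ein m2).2 (Or.inl rfl)
    · rw [← ho, hRin eout m3]
      rintro (h | h)
      · exact h3' h.symm
      · exact h2 h.symm
    · rw [← he]; exact (hRout e m1).2 (Or.inr rfl)
    · rw [← ho]; exact (hRout eout m3).2 (Or.inl rfl)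
    · rw [← hi, hRout ein m2]
      rintro (h | h)
      · exact h3' h
      · exact h1 h.symm
  have hT0 : ∀ v, v ∈ ({a, b, c} : Set V) ↔ v = a ∨ v = b ∨ v = c := by intro v; rfl
  rcases m1 with r1 | r1 | r1 <;> rcases m2 with r2 | r2 | r2 <;> rcases m3 with r3 | r3 | r3 <;>
    first
    | exact absurd (r1.trans r2.symm) h1
    | exact absurd (r1.trans r3.symm) h2
    | exact absurd (r2.trans r3.symm) h3'
    | skip
  · exact key b a c hab.symm hbc hac (fun v => by rw [hT0]; tauto) (r1.trans Sym2.eq_swap) r2 r3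
  · exact key a b c hab hac hbc (fun v => by rw [hT0]) r1 r2 r3
  · exact key b c a hbc hab.symm hac.symm (fun v => by rw [hT0]; tauto) r1 (r2.trans Sym2.eq_swap)
      (r3.trans Sym2.eq_swap)
  · exact key c b a hbc.symm hac.symm hab.symm (fun v => by rw [hT0]; tauto) (r1.trans Sym2.eq_swap)
      (r2.trans Sym2.eq_swap) (r3.trans Sym2.eq_swap)
  · exact key a c b hac hab hbc.symm (fun v => by rw [hT0]; tauto) r1 r2 (r3.trans Sym2.eq_swap)
  · exact key c a b hac.symm hbc.symm hab (fun v => by rw [hT0]; tauto) (r1.trans Sym2.eq_swap)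
      (r2.trans Sym2.eq_swap) r3
end

section
/- Two distinct anchored trees T-bar and T'-bar share at most one common anchor. -/
open Set

universe u

section Blocks

variable {V : Type u} {G : SimpleGraph V} {v0 : V}

/-- The point set covered by the drawing of the edges of a closed walk. -/
def cycleDrawing (E : PlaneEmbedding G) (w : G.Walk v0 v0) : Set (ℝ × ℝ) :=
  {p | ∃ (u v : V) (h : G.Adj u v), s(u, v) ∈ w.edges ∧ p ∈ E.arc h}

/-- The vertices of `G` strictly inside the cycle `w` (in the bounded part of the
complement of the Jordan curve drawn by `w`). -/
def insideCycle (E : PlaneEmbedding G) (w : G.Walk v0 v0) : Set V :=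
  {u | u ∉ w.support ∧
    Bornology.IsBounded (connectedComponentIn (cycleDrawing E w)ᶜ (E.pos u))}

/-- `in(C)`: the subgraph of `G` induced by the vertices strictly inside the cycle. -/
def innerGraph (E : PlaneEmbedding G) (w : G.Walk v0 v0) :
    SimpleGraph ↥(insideCycle E w) :=
  G.induce (insideCycle E w)

/-- `in⁺(C)`: the subgraph of `G` induced by the cycle together with the vertices
strictly inside it. -/
def closedInnerSet (E : PlaneEmbedding G) (w : G.Walk v0 v0) : Set V :=
  {u | u ∈ w.support} ∪ insideCycle E w

/-- The graph `in(C)` with all its bridges deleted; its connected components are the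
bridge-blocks of `in(C)`. -/
def bridgelessInner (E : PlaneEmbedding G) (w : G.Walk v0 v0) :
    SimpleGraph ↥(insideCycle E w) :=
  (innerGraph E w).deleteEdges {e | (innerGraph E w).IsBridge e}

/-- Block-vertices: the bridge-blocks of `in(C)`, i.e. the connected components
obtained after deleting all bridges of `in(C)`. -/
abbrev BlockVertex (E : PlaneEmbedding G) (w : G.Walk v0 v0) :=
  (bridgelessInner E w).ConnectedComponent

/-- The block-vertex (bridge-block) containing a given vertex of `in(C)`. -/
def blockOf (E : PlaneEmbedding G) (w : G.Walk v0 v0) (u : ↥(insideCycle E w)) :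
    BlockVertex E w :=
  (bridgelessInner E w).connectedComponentMk u

/-- A block-vertex is an anchor if it is adjacent (in `G`) to a vertex of the cycle. -/
def IsAnchor (E : PlaneEmbedding G) (w : G.Walk v0 v0) (b : BlockVertex E w) : Prop :=
  ∃ u : ↥(insideCycle E w), blockOf E w u = b ∧ ∃ z ∈ w.support, G.Adj ↑u z

/-- The graph on block-vertices: two blocks are adjacent iff some edge of `in(C)`
joins them. -/
def blockGraph (E : PlaneEmbedding G) (w : G.Walk v0 v0) :
    SimpleGraph (BlockVertex E w) :=
  SimpleGraph.fromRel fun b b' => ∃ u u' : ↥(insideCycle E w),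
    blockOf E w u = b ∧ blockOf E w u' = b' ∧ (innerGraph E w).Adj u u'

/-- The ancillaries: block-vertices that are not anchors. -/
def ancillarySet (E : PlaneEmbedding G) (w : G.Walk v0 v0) : Set (BlockVertex E w) :=
  {b | ¬ IsAnchor E w b}

/-- The forest formed by the ancillaries. -/
def ancForest (E : PlaneEmbedding G) (w : G.Walk v0 v0) :
    SimpleGraph ↥(ancillarySet E w) :=
  (blockGraph E w).induce (ancillarySet E w)

/-- The trees of the forest of ancillaries. -/
abbrev TreeIndex (E : PlaneEmbedding G) (w : G.Walk v0 v0) :=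
  (ancForest E w).ConnectedComponent

/-- The ancillaries belonging to the tree `t` of the forest of ancillaries. -/
def ancillariesOf (E : PlaneEmbedding G) (w : G.Walk v0 v0) (t : TreeIndex E w) :
    Set (BlockVertex E w) :=
  {b | ∃ h : b ∈ ancillarySet E w, (ancForest E w).connectedComponentMk ⟨b, h⟩ = t}

/-- The anchors of the anchored tree of `t`: the anchors adjacent to at least one
ancillary of `t`. -/
def anchorsOf (E : PlaneEmbedding G) (w : G.Walk v0 v0) (t : TreeIndex E w) :
    Set (BlockVertex E w) :=
  {x | IsAnchor E w x ∧ ∃ b ∈ ancillariesOf E w t, (blockGraph E w).Adj x b}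

/-- The vertex set of the anchored tree of `t`. -/
def anchoredTreeSet (E : PlaneEmbedding G) (w : G.Walk v0 v0) (t : TreeIndex E w) :
    Set (BlockVertex E w) :=
  ancillariesOf E w t ∪ anchorsOf E w t

/-- The anchored tree of `t`: the tree `t` together with its anchors. -/
def anchoredTree (E : PlaneEmbedding G) (w : G.Walk v0 v0) (t : TreeIndex E w) :
    SimpleGraph ↥(anchoredTreeSet E w t) :=
  (blockGraph E w).induce (anchoredTreeSet E w t)

end Blocks

/-- `v` lies on the (unique) path from `r` to `u` in the tree `T`; for trees this
expresses that `u` belongs to the subtree rooted at `v` when `T` is rooted at `r`. -/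
def InSubtree {W : Type u} (T : SimpleGraph W) (r v u : W) : Prop :=
  ∀ p : T.Walk r u, p.IsPath → v ∈ p.support

/-- `lab` is the labeling of the tree `T`, rooted at `r`, by a pre-order traversal
(with respect to some ordering of the children of each vertex): labels are distinct,
the root gets label `0`, and the labels of each subtree form a contiguous interval
starting at the label of its root. -/
def IsPreorderLabeling {W : Type u} (T : SimpleGraph W) (r : W) (lab : W → ℕ) : Prop :=
  Function.Injective lab ∧ lab r = 0 ∧
    ∀ v : W, lab '' {u | InSubtree T r v u} =
      Set.Ico (lab v) (lab v + Nat.card {u | InSubtree T r v u})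

theorem blockGraph_not_reachable {V : Type u} {G : SimpleGraph V} (E : PlaneEmbedding G)
    {v0 : V} (w : G.Walk v0 v0) {b b' : BlockVertex E w} (h : (blockGraph E w).Adj b b') :
    ¬ ((blockGraph E w).deleteEdges {s(b, b')}).Reachable b b' := by
  intro hr
  have key : ∃ u u' : ↥(insideCycle E w),
      blockOf E w u = b ∧ blockOf E w u' = b' ∧ (innerGraph E w).Adj u u' := by
    have h2 := h
    simp only [blockGraph, SimpleGraph.fromRel_adj] at h2
    obtain ⟨_, h2 | ⟨u, u', h1, h2, h3⟩⟩ := h2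
    · exact h2
    · exact ⟨u', u, h2, h1, h3.symm⟩
  obtain ⟨u, u', hu, hu', hadj⟩ := key
  have hbne : b ≠ b' := h.ne
  have hbr : (innerGraph E w).IsBridge s(u, u') := by
    by_contra hnb
    apply hbne
    rw [← hu, ← hu']
    apply SimpleGraph.ConnectedComponent.sound
    apply SimpleGraph.Adj.reachable
    simp only [bridgelessInner, SimpleGraph.deleteEdges_adj]
    exact ⟨hadj, hnb⟩
  have hle : bridgelessInner E w ≤ (innerGraph E w).deleteEdges {s(u, u')} := by
    intro p q hpq
    simp only [bridgelessInner, SimpleGraph.deleteEdges_adj] at hpq ⊢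
    refine ⟨hpq.1, fun hc => hpq.2 ?_⟩
    have hc' : s(p, q) = s(u, u') := hc
    rw [hc']
    exact hbr
  have same : ∀ p q, blockOf E w p = blockOf E w q →
      ((innerGraph E w).deleteEdges {s(u, u')}).Reachable p q := by
    intro p q hpq
    exact (SimpleGraph.ConnectedComponent.exact hpq).mono hle
  have lift : ∀ c d : BlockVertex E w,
      ((blockGraph E w).deleteEdges {s(b, b')}).Reachable c d → ∀ p q,
      blockOf E w p = c → blockOf E w q = d →
      ((innerGraph E w).deleteEdges {s(u, u')}).Reachable p q := by
    rintro c d ⟨wk⟩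
    induction wk with
    | nil => intro p q hp hq; exact same p q (hp.trans hq.symm)
    | @cons c e d hce _ ih =>
      intro p q hp hq
      rw [SimpleGraph.deleteEdges_adj] at hce
      obtain ⟨hce, hne⟩ := hce
      have hx : ∃ r s : ↥(insideCycle E w),
          blockOf E w r = c ∧ blockOf E w s = e ∧ (innerGraph E w).Adj r s := by
        simp only [blockGraph, SimpleGraph.fromRel_adj] at hce
        obtain ⟨_, h2 | ⟨u, u', h1, h2, h3⟩⟩ := hce
        · exact h2
        · exact ⟨u', u, h2, h1, h3.symm⟩
      obtain ⟨r, s, hr, hs, hrs⟩ := hx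
      refine ((same p r (hp.trans hr.symm)).trans ?_).trans (ih s q hs hq)
      apply SimpleGraph.Adj.reachable
      rw [SimpleGraph.deleteEdges_adj]
      refine ⟨hrs, fun hc => hne ?_⟩
      have hc' : s(r, s) = s(u, u') := hc
      have := congrArg (Sym2.map (blockOf E w)) hc'
      simp only [Sym2.map_mk, hr, hs, hu, hu'] at this
      exact this
  have hfin := lift b b' hr u u' hu hu'
  rw [SimpleGraph.isBridge_iff] at hbr
  first
    | exact hbr.2 hfin
    | exact hbr hfin

theorem tree_reachable {V : Type u} {G : SimpleGraph V} (E : PlaneEmbedding G)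
    {v0 : V} (w : G.Walk v0 v0) {x a : BlockVertex E w} (hx : IsAnchor E w x)
    {t : TreeIndex E w} {b c : BlockVertex E w}
    (hb : b ∈ ancillariesOf E w t) (hc : c ∈ ancillariesOf E w t) :
    ((blockGraph E w).deleteEdges {s(x, a)}).Reachable b c := by
  obtain ⟨hb, hbt⟩ := hb
  obtain ⟨hc, hct⟩ := hc
  have hr := SimpleGraph.ConnectedComponent.exact (hbt.trans hct.symm)
  let f : ancForest E w →g (blockGraph E w).deleteEdges {s(x, a)} :=
    { toFun := Subtype.val
      map_rel' := by
        intro p q hpq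
        rw [SimpleGraph.deleteEdges_adj]
        refine ⟨hpq, fun h => ?_⟩
        have h' : s(p.1, q.1) = s(x, a) := h
        rw [Sym2.eq_iff] at h'
        rcases h' with ⟨h1, _⟩ | ⟨_, h1⟩
        · exact p.2 (h1 ▸ hx)
        · exact q.2 (h1 ▸ hx) }
  exact hr.map f

/-- Two distinct anchored trees share at most one common anchor. -/
theorem anchored_trees_share_at_most_one_anchor {V : Type u} {G : SimpleGraph V}
    (hbic : G.IsBiconnected) (hdeg : G.MaxDegreeLE 4) (E : PlaneEmbedding G)
    {v0 : V} (w : G.Walk v0 v0) (hw : w.IsCycle) (t t' : TreeIndex E w)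
    (hne : t ≠ t') :
    (anchorsOf E w t ∩ anchorsOf E w t').Subsingleton := by
  rintro x ⟨⟨hx, b, hb, hxb⟩, ⟨_, b', hb', hxb'⟩⟩ y ⟨⟨hy, c, hc, hyc⟩, ⟨_, c', hc', hyc'⟩⟩
  by_contra hxy
  apply blockGraph_not_reachable E w hxb
  have hyb : y ≠ b := by
    rintro rfl
    exact hb.1 hy
  have hbb : b' ≠ b := by
    rintro rfl
    obtain ⟨_, h1⟩ := hb
    obtain ⟨_, h2⟩ := hb'
    exact hne (h1.symm.trans h2)
  have e1 : ∀ d, (blockGraph E w).Adj y d →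
      ((blockGraph E w).deleteEdges {s(x, b)}).Reachable y d := by
    intro d hd
    apply SimpleGraph.Adj.reachable
    rw [SimpleGraph.deleteEdges_adj]
    refine ⟨hd, fun h => ?_⟩
    have h' : s(y, d) = s(x, b) := h
    rw [Sym2.eq_iff] at h'
    rcases h' with ⟨h1, _⟩ | ⟨h1, _⟩
    · exact hxy h1.symm
    · exact hyb h1
  have e2 : ((blockGraph E w).deleteEdges {s(x, b)}).Reachable x b' := by
    apply SimpleGraph.Adj.reachable
    rw [SimpleGraph.deleteEdges_adj]
    refine ⟨hxb', fun h => ?_⟩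
    have h' : s(x, b') = s(x, b) := h
    rw [Sym2.eq_iff] at h'
    rcases h' with ⟨_, h1⟩ | ⟨h1, _⟩
    · exact hbb h1
    · exact hxb.ne h1
  exact (((e2.trans (tree_reachable E w hx hb' hc')).trans (e1 c' hyc').symm).trans
    (e1 c hyc)).trans (tree_reachable E w hx hc hb)
end

section
/- Every anchored tree T-bar contains at least two anchors. -/
open Set

universe u

section Aux

variable {V : Type u} {G : SimpleGraph V} {v0 : V}

theorem arc_avoids_cycle (E : PlaneEmbedding G) (w : G.Walk v0 v0) {u v : V} (h : G.Adj u v)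
    (hu : u ∉ w.support) (hv : v ∉ w.support) : E.arc h ⊆ (cycleDrawing E w)ᶜ := by
  rintro p hp ⟨a, b, hab, he, hpa⟩
  have ha := w.fst_mem_support_of_mem_edges he
  have hb := w.snd_mem_support_of_mem_edges he
  have hne : s(u, v) ≠ s(a, b) := by
    intro hh
    rw [Sym2.eq_iff] at hh
    rcases hh with ⟨rfl, rfl⟩ | ⟨rfl, rfl⟩ <;> contradiction
  obtain ⟨h1, h2⟩ := E.arc_inter h hab hne ⟨hp, hpa⟩
  simp only [Set.mem_insert_iff, Set.mem_singleton_iff] at h1 h2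
  rcases h1 with h1 | h1 <;> rcases h2 with h2 | h2 <;>
  · have := E.pos_inj (h1.symm.trans h2)
    subst this
    contradiction

theorem inside_closed (E : PlaneEmbedding G) (w : G.Walk v0 v0) {u v : V} (h : G.Adj u v)
    (hu : u ∈ insideCycle E w) (hv : v ∉ w.support) : v ∈ insideCycle E w := by
  refine ⟨hv, ?_⟩
  obtain ⟨f, hf, -, h0, h1, him⟩ := E.arc_curve h
  have hsub := arc_avoids_cycle E w h hu.1 hv
  have hconn : IsPreconnected (E.arc h) := by
    rw [← him]
    exact isPreconnected_Icc.image f hf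
  have hpu : E.pos u ∈ E.arc h := by
    rw [← him, ← h0]; exact ⟨0, by simp, rfl⟩
  have hpv : E.pos v ∈ E.arc h := by
    rw [← him, ← h1]; exact ⟨1, by simp, rfl⟩
  have := hconn.subset_connectedComponentIn hpu hsub hpv
  rw [← connectedComponentIn_eq this]
  exact hu.2

theorem exit_edge (E : PlaneEmbedding G) (w : G.Walk v0 v0) (t : TreeIndex E w)
    {u v : V} (h : G.Adj u v) (hu : u ∈ insideCycle E w)
    (hut : blockOf E w ⟨u, hu⟩ ∈ ancillariesOf E w t)
    (hvt : ¬ ∃ hv : v ∈ insideCycle E w, blockOf E w ⟨v, hv⟩ ∈ ancillariesOf E w t) :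
    ∃ hv : v ∈ insideCycle E w, blockOf E w ⟨v, hv⟩ ∈ anchorsOf E w t := by
  obtain ⟨hanc, htt⟩ := hut
  have hvs : v ∉ w.support := fun hv => hanc ⟨⟨u, hu⟩, rfl, v, hv, h⟩
  have hv := inside_closed E w h hu hvs
  refine ⟨hv, ?_⟩
  have hne : blockOf E w ⟨v, hv⟩ ≠ blockOf E w ⟨u, hu⟩ := by
    intro hh
    exact hvt ⟨hv, by rw [hh]; exact ⟨hanc, htt⟩⟩
  have hadj : (blockGraph E w).Adj (blockOf E w ⟨v, hv⟩) (blockOf E w ⟨u, hu⟩) :=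
    ⟨hne, Or.inl ⟨_, _, rfl, rfl, h.symm⟩⟩
  refine ⟨?_, _, ⟨hanc, htt⟩, hadj⟩
  by_contra hna
  refine hvt ⟨hv, hna, ?_⟩
  rw [← htt, SimpleGraph.ConnectedComponent.eq]
  exact SimpleGraph.Adj.reachable hadj

end Aux

/-- Every anchored tree contains at least two anchors. -/
theorem anchored_tree_has_two_anchors {V : Type u} {G : SimpleGraph V}
    (hbic : G.IsBiconnected) (hdeg : G.MaxDegreeLE 4) (E : PlaneEmbedding G)
    {v0 : V} (w : G.Walk v0 v0) (hw : w.IsCycle) (t : TreeIndex E w) :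
    ∃ x y : BlockVertex E w, x ∈ anchorsOf E w t ∧ y ∈ anchorsOf E w t ∧ x ≠ y := by
  classical
  obtain ⟨-, hconn, hdel⟩ := hbic
  set U : Set V := {u | ∃ hu : u ∈ insideCycle E w, blockOf E w ⟨u, hu⟩ ∈ ancillariesOf E w t}
    with hU
  have hvU : v0 ∉ U := fun ⟨h, _⟩ => h.1 w.start_mem_support
  obtain ⟨u₀, hu₀⟩ : ∃ u, u ∈ U := by
    induction t using SimpleGraph.ConnectedComponent.ind with
    | _ b =>
      obtain ⟨b, hb⟩ := b
      induction b using SimpleGraph.ConnectedComponent.ind with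
      | _ u => exact ⟨u.1, u.2, hb, rfl⟩
  obtain ⟨p⟩ := hconn.preconnected u₀ v0
  obtain ⟨d, -, hd1, hd2⟩ := p.exists_boundary_dart U hu₀ hvU
  obtain ⟨⟨u, a⟩, hua⟩ := d
  change G.Adj u a at hua
  change u ∈ U at hd1
  change a ∉ U at hd2
  obtain ⟨hu, hut⟩ := id hd1
  obtain ⟨ha, hat⟩ := exit_edge E w t hua hu hut hd2
  have hau : u ≠ a := hua.ne
  have hv0a : v0 ≠ a := fun h => ha.1 (h ▸ w.start_mem_support)
  obtain ⟨q⟩ := (hdel a).preconnected ⟨u, hau⟩ ⟨v0, hv0a⟩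
  obtain ⟨d, -, hd3, hd4⟩ := q.exists_boundary_dart (Subtype.val ⁻¹' U) hd1 hvU
  obtain ⟨⟨⟨u', hu'a⟩, ⟨a', ha'a⟩⟩, hua'⟩ := d
  change G.Adj u' a' at hua'
  change u' ∈ U at hd3
  change a' ∉ U at hd4
  change a' ≠ a at ha'a
  obtain ⟨hu', hut'⟩ := id hd3
  obtain ⟨ha', hat'⟩ := exit_edge E w t hua' hu' hut' hd4
  refine ⟨_, _, hat, hat', ?_⟩
  intro heq
  set I := innerGraph E w with hI
  have hIua : I.Adj ⟨u, hu⟩ ⟨a, ha⟩ := hua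
  have hbr : I.IsBridge s(⟨u, hu⟩, ⟨a, ha⟩) := by
    by_contra hnb
    have : (bridgelessInner E w).Adj ⟨u, hu⟩ ⟨a, ha⟩ := by
      rw [bridgelessInner, SimpleGraph.deleteEdges_adj]
      exact ⟨hIua, hnb⟩
    have hb : blockOf E w ⟨u, hu⟩ = blockOf E w ⟨a, ha⟩ :=
      SimpleGraph.ConnectedComponent.eq.2 this.reachable
    apply hut.1
    rw [hb]
    exact hat.1
  set H := I.deleteEdges {s(⟨u, hu⟩, ⟨a, ha⟩)} with hH
  have hle : bridgelessInner E w ≤ H := by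
    apply SimpleGraph.deleteEdges_anti
    rintro e rfl
    exact hbr
  have hblk : ∀ y z, blockOf E w y = blockOf E w z → H.Reachable y z := fun y z h =>
    (SimpleGraph.ConnectedComponent.eq.1 h).mono hle
  have hstep : ∀ y z, I.Adj y z → y.1 ≠ a → z.1 ≠ a → H.Reachable y z := by
    intro y z hyz hy hz
    refine SimpleGraph.Adj.reachable ?_
    rw [hH, SimpleGraph.deleteEdges_adj]
    refine ⟨hyz, ?_⟩
    rw [Set.mem_singleton_iff, Sym2.eq_iff]
    rintro (⟨-, rfl⟩ | ⟨rfl, -⟩)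
    · exact hz rfl
    · exact hy rfl
  have hnota : ∀ y, ¬ IsAnchor E w (blockOf E w y) → y.1 ≠ a := by
    rintro ⟨y, hy⟩ hn rfl
    exact hn hat.1
  have htree : ∀ (b b' : ↥(ancillarySet E w)), (ancForest E w).Walk b b' →
      ∀ y z, blockOf E w y = b.1 → blockOf E w z = b'.1 → H.Reachable y z := by
    intro b b' r
    induction r with
    | nil => intro y z hy hz; exact hblk _ _ (hy.trans hz.symm)
    | @cons b c b' hbc r ih =>
      intro y z hy hz
      have hbc' : (blockGraph E w).Adj b.1 c.1 := hbc
      obtain ⟨-, hor⟩ := hbc'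
      obtain ⟨y1, y2, h1, h2, h12⟩ : ∃ y1 y2 : ↥(insideCycle E w), blockOf E w y1 = b.1 ∧
          blockOf E w y2 = c.1 ∧ I.Adj y1 y2 := by
        rcases hor with ⟨y1, y2, h1, h2, h12⟩ | ⟨y1, y2, h1, h2, h12⟩
        · exact ⟨y1, y2, h1, h2, h12⟩
        · exact ⟨y2, y1, h2, h1, h12.symm⟩
      refine (hblk y y1 (hy.trans h1.symm)).trans ((hstep y1 y2 h12 ?_ ?_).trans (ih y2 z h2 hz))
      · apply hnota; rw [h1]; exact b.2
      · apply hnota; rw [h2]; exact c.2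
  have hr1 : H.Reachable ⟨u, hu⟩ ⟨u', hu'⟩ := by
    obtain ⟨h1, h1t⟩ := hut
    obtain ⟨h2, h2t⟩ := hut'
    obtain ⟨r⟩ := SimpleGraph.ConnectedComponent.eq.1 (h1t.trans h2t.symm)
    exact htree _ _ r _ _ rfl rfl
  have hr2 : H.Reachable ⟨u', hu'⟩ ⟨a', ha'⟩ := hstep _ _ hua' (hnota _ hut'.1) ha'a
  have hr3 : H.Reachable ⟨a', ha'⟩ ⟨a, ha⟩ := hblk _ _ heq.symm
  exact (SimpleGraph.isBridge_iff.1 hbr) (hr1.trans (hr2.trans hr3))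
end

section
/- In an anchored tree T-bar, a vertex is a leaf of T-bar if and only if it is an anchor of T-bar. -/
open Set

universe u

section AnchorProof

variable {V : Type u} {G : SimpleGraph V} {v0 : V}

theorem aux_inside_adj (E : PlaneEmbedding G) (w : G.Walk v0 v0) {a b : V}
    (ha : a ∈ insideCycle E w) (hab : G.Adj a b) (hb : b ∉ w.support) :
    b ∈ insideCycle E w := by
  obtain ⟨ha1, ha2⟩ := ha
  refine ⟨hb, ?_⟩
  obtain ⟨f, hfc, -, hf0, hf1, hfa⟩ := E.arc_curve hab
  have hpre : IsPreconnected (E.arc hab) := by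
    rw [← hfa]
    exact isPreconnected_Icc.image f hfc
  have h0 : E.pos a ∈ E.arc hab := by
    rw [← hfa, ← hf0]; exact ⟨0, by simp, rfl⟩
  have h1 : E.pos b ∈ E.arc hab := by
    rw [← hfa, ← hf1]; exact ⟨1, by simp, rfl⟩
  have hsub : E.arc hab ⊆ (cycleDrawing E w)ᶜ := by
    rintro p hp ⟨c, d, hcd, hmem, hp2⟩
    have hc : c ∈ w.support := w.fst_mem_support_of_mem_edges hmem
    have hd : d ∈ w.support := w.snd_mem_support_of_mem_edges hmem
    have hne : s(a, b) ≠ s(c, d) := by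
      intro h
      rw [Sym2.eq_iff] at h
      rcases h with ⟨h, -⟩ | ⟨h, -⟩
      · exact ha1 (h ▸ hc)
      · exact ha1 (h ▸ hd)
    obtain ⟨h2, h3⟩ := E.arc_inter hab hcd hne ⟨hp, hp2⟩
    rcases h2 with h2 | h2 <;> rcases h3 with h3 | h3 <;>
      (have h4 := E.pos_inj (h2.symm.trans h3); subst h4; contradiction)
  have := hpre.subset_connectedComponentIn h0 hsub h1
  rwa [← connectedComponentIn_eq this]

theorem aux_block_reach (E : PlaneEmbedding G) (w : G.Walk v0 v0)
    {a b : ↥(insideCycle E w)} {e : Sym2 ↥(insideCycle E w)}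
    (he : (innerGraph E w).IsBridge e) (h : blockOf E w a = blockOf E w b) :
    ((innerGraph E w).deleteEdges {e}).Reachable a b := by
  have h' : (bridgelessInner E w).Reachable a b := SimpleGraph.ConnectedComponent.exact h
  refine h'.mono ?_
  exact SimpleGraph.deleteEdges_anti (Set.singleton_subset_iff.2 he)

theorem aux_cross_bridge (E : PlaneEmbedding G) (w : G.Walk v0 v0)
    {a b : ↥(insideCycle E w)} (hab : (innerGraph E w).Adj a b)
    (h : blockOf E w a ≠ blockOf E w b) : (innerGraph E w).IsBridge s(a, b) := by
  by_contra hc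
  apply h
  apply SimpleGraph.ConnectedComponent.sound
  apply SimpleGraph.Adj.reachable
  exact (SimpleGraph.deleteEdges_adj).2 ⟨hab, hc⟩

theorem aux_unique (E : PlaneEmbedding G) (w : G.Walk v0 v0)
    {a b a' b' : ↥(insideCycle E w)} (hab : (innerGraph E w).Adj a b)
    (hab' : (innerGraph E w).Adj a' b')
    (ha : blockOf E w a = blockOf E w a') (hb : blockOf E w b = blockOf E w b')
    (h : blockOf E w a ≠ blockOf E w b) : b = b' := by
  have hbr := aux_cross_bridge E w hab h
  by_cases he : s(a', b') = s(a, b)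
  · rw [Sym2.eq_iff] at he
    rcases he with ⟨-, h2⟩ | ⟨h2, -⟩
    · exact h2.symm
    · subst h2; exact absurd ha h
  · exfalso
    have h1 := aux_block_reach E w hbr ha
    have h2 := aux_block_reach E w hbr hb.symm
    have h3 : ((innerGraph E w).deleteEdges {s(a, b)}).Adj a' b' :=
      (SimpleGraph.deleteEdges_adj).2 ⟨hab', he⟩
    exact (SimpleGraph.isBridge_iff.1 hbr) ((h1.trans h3.reachable).trans h2)

theorem aux_blockGraph_adj (E : PlaneEmbedding G) (w : G.Walk v0 v0)
    {B B' : BlockVertex E w} (h : (blockGraph E w).Adj B B') :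
    B ≠ B' ∧ ∃ a b : ↥(insideCycle E w), blockOf E w a = B ∧ blockOf E w b = B' ∧
      (innerGraph E w).Adj a b := by
  obtain ⟨hne, ⟨a, b, h1, h2, h3⟩ | ⟨a, b, h1, h2, h3⟩⟩ := (SimpleGraph.fromRel_adj _ _ _).1 h
  · exact ⟨hne, a, b, h1, h2, h3⟩
  · exact ⟨hne, b, a, h2, h1, h3.symm⟩

theorem aux_block_bridge (E : PlaneEmbedding G) (w : G.Walk v0 v0)
    {B B' : BlockVertex E w} (h : (blockGraph E w).Adj B B') :
    ¬ ((blockGraph E w).deleteEdges {s(B, B')}).Reachable B B' := by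
  obtain ⟨hne, a, b, rfl, rfl, hab⟩ := aux_blockGraph_adj E w h
  have hbr := aux_cross_bridge E w hab hne
  rintro ⟨p⟩
  have key : ∀ (X Y : BlockVertex E w)
      (_ : ((blockGraph E w).deleteEdges {s(blockOf E w a, blockOf E w b)}).Walk X Y)
      (c d : ↥(insideCycle E w)), blockOf E w c = X → blockOf E w d = Y →
      ((innerGraph E w).deleteEdges {s(a, b)}).Reachable c d := by
    intro X Y q
    induction q with
    | nil =>
      intro c d hc hd
      exact aux_block_reach E w hbr (hc.trans hd.symm)
    | cons hadj q ih =>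
      intro c d hc hd
      obtain ⟨h1, h2⟩ := SimpleGraph.deleteEdges_adj.1 hadj
      obtain ⟨-, c', d', hc', hd', hcd⟩ := aux_blockGraph_adj E w h1
      have hr := aux_block_reach E w hbr (hc.trans hc'.symm)
      have hs : ((innerGraph E w).deleteEdges {s(a, b)}).Adj c' d' := by
        refine SimpleGraph.deleteEdges_adj.2 ⟨hcd, ?_⟩
        intro he
        apply h2
        have he' : s(c', d') = s(a, b) := he
        have := congrArg (Sym2.map (blockOf E w)) he'
        simpa [hc', hd'] using this
      exact (hr.trans hs.reachable).trans (ih d' d hd' hd)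
  exact (SimpleGraph.isBridge_iff.1 hbr) (key _ _ p a b rfl rfl)

theorem aux_anc_reach (E : PlaneEmbedding G) (w : G.Walk v0 v0) (t : TreeIndex E w)
    {x y1 b c : BlockVertex E w} (hx : IsAnchor E w x)
    (hb : b ∈ ancillariesOf E w t) (hc : c ∈ ancillariesOf E w t) :
    ((blockGraph E w).deleteEdges {s(x, y1)}).Reachable b c := by
  obtain ⟨hb, hbt⟩ := hb
  obtain ⟨hc, hct⟩ := hc
  have hr : (ancForest E w).Reachable ⟨b, hb⟩ ⟨c, hc⟩ :=
    SimpleGraph.ConnectedComponent.exact (hbt.trans hct.symm)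
  let φ : ancForest E w →g (blockGraph E w).deleteEdges {s(x, y1)} :=
    { toFun := fun z => z.1
      map_rel' := by
        rintro ⟨p, hp⟩ ⟨q, hq⟩ hpq
        refine SimpleGraph.deleteEdges_adj.2 ⟨hpq, ?_⟩
        intro he
        have he' : s(p, q) = s(x, y1) := he
        rw [Sym2.eq_iff] at he'
        rcases he' with ⟨h, -⟩ | ⟨-, h⟩
        · exact hp (h ▸ hx)
        · exact hq (h ▸ hx) }
  exact hr.map φ

theorem aux_tree_reach (E : PlaneEmbedding G) (w : G.Walk v0 v0) (t : TreeIndex E w)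
    {x y1 b y : BlockVertex E w} (hx : IsAnchor E w x)
    (hb : b ∈ ancillariesOf E w t) (hy : y ∈ anchoredTreeSet E w t) (hyx : y ≠ x) :
    ((blockGraph E w).deleteEdges {s(x, y1)}).Reachable y b := by
  rcases hy with hy | ⟨-, c, hc, hyc⟩
  · exact aux_anc_reach E w t hx hy hb
  · have hcx : c ≠ x := by
      rintro rfl
      exact hc.1 hx
    have : ((blockGraph E w).deleteEdges {s(x, y1)}).Adj y c := by
      refine SimpleGraph.deleteEdges_adj.2 ⟨hyc, ?_⟩
      intro he
      have he' : s(y, c) = s(x, y1) := he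
      rw [Sym2.eq_iff] at he'
      rcases he' with ⟨h, -⟩ | ⟨-, h⟩
      · exact hyx h
      · exact hcx h
    exact this.reachable.trans (aux_anc_reach E w t hx hc hb)

theorem aux_anc_nbr (E : PlaneEmbedding G) (w : G.Walk v0 v0) (t : TreeIndex E w)
    {x y : BlockVertex E w} (hx : x ∈ ancillariesOf E w t) (hxy : (blockGraph E w).Adj x y) :
    y ∈ anchoredTreeSet E w t := by
  by_cases hy : IsAnchor E w y
  · exact Or.inr ⟨hy, x, hx, hxy.symm⟩
  · left
    obtain ⟨h, ht⟩ := hx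
    refine ⟨hy, ?_⟩
    rw [← ht]
    apply SimpleGraph.ConnectedComponent.sound
    apply SimpleGraph.Adj.reachable
    exact hxy.symm

end AnchorProof

/-- In an anchored tree, a vertex is a leaf iff it is an anchor of the
anchored tree. -/
theorem anchored_tree_leaf_iff_anchor {V : Type u} {G : SimpleGraph V}
    (hbic : G.IsBiconnected) (hdeg : G.MaxDegreeLE 4) (E : PlaneEmbedding G)
    {v0 : V} (w : G.Walk v0 v0) (hw : w.IsCycle) (t : TreeIndex E w)
    (x : ↥(anchoredTreeSet E w t)) :
    ((anchoredTree E w t).neighborSet x).ncard = 1 ↔ ↑x ∈ anchorsOf E w t := by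
  constructor
  · intro hcard
    rcases x.2 with hx | hx
    swap
    · exact hx
    exfalso
    obtain ⟨y, hy⟩ := Set.ncard_eq_one.1 hcard
    have hxy : (blockGraph E w).Adj x.1 y.1 := by
      have : y ∈ (anchoredTree E w t).neighborSet x := by rw [hy]; rfl
      exact this
    have huniq : ∀ z : BlockVertex E w, (blockGraph E w).Adj x.1 z → z = y.1 := by
      intro z hz
      have : (⟨z, aux_anc_nbr E w t hx hz⟩ : ↥(anchoredTreeSet E w t)) ∈
          (anchoredTree E w t).neighborSet x := hz
      rw [hy] at this
      exact congrArg Subtype.val this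
    obtain ⟨hne, a, b, hax, hby, hab⟩ := aux_blockGraph_adj E w hxy
    have hconn := hbic.2.2 b.1
    have hv0 : v0 ≠ b.1 := by
      intro h
      exact b.2.1 (h ▸ w.start_mem_support)
    have hab' : a.1 ≠ b.1 := fun h => hab.ne (Subtype.ext h)
    obtain ⟨p⟩ := hconn.preconnected ⟨a.1, hab'⟩ ⟨v0, hv0⟩
    have key : ∀ (c d : {z : V | z ≠ b.1}) (_ : (G.induce {z : V | z ≠ b.1}).Walk c d),
        (∃ h : c.1 ∈ insideCycle E w, blockOf E w ⟨c.1, h⟩ = x.1) →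
        (∃ h : d.1 ∈ insideCycle E w, blockOf E w ⟨d.1, h⟩ = x.1) := by
      intro c d q
      induction q with
      | nil => exact id
      | @cons c d e hcd q ih =>
        rintro ⟨h, hcx⟩
        apply ih
        have hcd' : G.Adj c.1 d.1 := hcd
        have hds : d.1 ∉ w.support := fun hds => hx.1 ⟨⟨c.1, h⟩, hcx, d.1, hds, hcd'⟩
        have hd := aux_inside_adj E w h hcd' hds
        refine ⟨hd, ?_⟩
        by_contra hdx
        have hin : (innerGraph E w).Adj ⟨c.1, h⟩ ⟨d.1, hd⟩ := hcd'
        have hadj : (blockGraph E w).Adj x.1 (blockOf E w ⟨d.1, hd⟩) :=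
          (SimpleGraph.fromRel_adj _ _ _).2 ⟨Ne.symm hdx, Or.inl ⟨_, _, hcx, rfl, hin⟩⟩
        have hdy := huniq _ hadj
        have := aux_unique E w hab hin (hax.trans hcx.symm) (hby.trans hdy.symm)
          (by rw [hax, hby]; exact hne)
        exact d.2 (congrArg Subtype.val this).symm
    obtain ⟨h, -⟩ := key _ _ p ⟨a.2, hax⟩
    exact h.1 w.start_mem_support
  · rintro ⟨hx, b, hb, hxb⟩
    refine Set.ncard_eq_one.2 ⟨⟨b, Or.inl hb⟩, ?_⟩
    ext y
    constructor
    · intro hy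
      have hy' : (blockGraph E w).Adj x.1 y.1 := hy
      by_contra hyb
      have hyb' : y.1 ≠ b := fun h => hyb (Subtype.ext h)
      refine aux_block_bridge E w hxb ?_
      have h1 : ((blockGraph E w).deleteEdges {s(x.1, b)}).Adj x.1 y.1 := by
        refine SimpleGraph.deleteEdges_adj.2 ⟨hy', ?_⟩
        intro he
        have he' : s(x.1, y.1) = s(x.1, b) := he
        exact hyb' (Sym2.congr_right.1 he')
      exact h1.reachable.trans (aux_tree_reach E w t hx hb y.2 hy'.ne.symm)
    · rintro rfl
      exact hxb
end
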